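/- (Twist identity.) Let Γ be a completed primitive simple graph whose vertex set is partitioned as V = V₁ ⊔ V₂ ⊔ {a,b,c,d} with V₁ and V₂ nonempty and with no edge of Γ joining V₁ to V₂. Let τ : V → V be the permutation exchanging a ↔ b and c ↔ d and fixing all other vertices. Let Γ₀ be the graph on V whose edge set consists of: all edges of Γ having at least one endpoint in V₁ or lying entirely inside {a,b,c,d}, together with the images under τ of all edges of Γ having at least one endpoint in V₂. Suppose that Γ̃ is a simple 4-regular graph obtained from Γ₀ either with no further change, or after performing one or both of the following edge swaps inside {a,b,c,d}: replacing the edge ac by bd (or bd by ac), and/or replacing the edge ad by bc (or bc by ad). Then Γ̃ is completed primitive and the periods coincide: P_Γ = P_{Γ̃}. -/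

import Mathlib

/-!
Representing positions in `E` by points of the light cone in `ℝ × E × ℝ` turns `‖x - y‖²` into an
invariant bilinear form, and the point at infinity into a point like any other. The integrand of a
graph is homogeneous of degree minus the vertex degree in each representative, while a conformal map
with factor `λ` has Jacobian `λ ^ n` in dimension `n`. For `n`-regular graphs the two cancel. All
integrands are nonnegative, so the integrals can be taken in `[0, ∞]`, where Tonelli and changes of
variables need no convergence statement.

*Twist.* Place `a, b, c` at `∞, 0, e` and integrate over the position `t` of `d` last. An inversion
followed by a reflection exchanges `0` with `∞` and `e` with `t`. It comes from a linear isometry of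
the cone, which permutes suitably rescaled representatives of the four points exactly as `τ` does,
and the rescalings cancel in the integrand of any regular graph. Changing variables by this map at
the vertices of `V₂` only therefore replaces every edge meeting `V₂` by its image under `τ`. An edge
between two of the four points has the same propagator as its image, so the swaps are invisible.

*Choice of gauge.* The graph `τ(G)` is the twist of `G` by `τ` for which `V₂` consists of all fixed
vertices. The same statement thus lets `(u, w, z)` be replaced by `(w, u, v)` for any fourth vertex
`v`; with Euclidean motions this reaches every choice of three vertices.

*Cuts.* Let `A` be a set of vertices. If `τ` preserves `A`, the cuts of both graphs by `A` have the
same size. If `A` contains exactly one of `a, b` and one of `c, d`, the cut by `A` corresponds to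
the cut of `G` by `A` with `V₂` complemented. Otherwise, up to complements, `A` contains exactly one
vertex `q` of the four; then the excess of the cut by `A` over the degree of `q` is the sum of the
excesses of the cuts of `G` by `A ∖ V₂` and by `(A ∩ V₂) ∪ {τ q}`.
-/

open scoped Classical

/-- The set of edges of `G` with one endpoint in `A` and the other outside `A`. -/
noncomputable def cutEdges {V : Type*} [Fintype V] (G : SimpleGraph V) (A : Finset V) :
    Finset (Sym2 V) :=
  G.edgeFinset.filter (fun e => ∃ x, x ∈ e ∧ x ∈ A ∧ ∃ y, y ∈ e ∧ y ∉ A)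

/-- A finite simple graph is *completed primitive* if it is 4-regular, connected, has at
least 3 vertices, and every edge cut separating two parts with at least two vertices each
has size strictly greater than 4. -/
def CompletedPrimitive {V : Type*} [Fintype V] (G : SimpleGraph V) : Prop :=
  (∀ v : V, G.degree v = 4) ∧ G.Connected ∧ 3 ≤ Fintype.card V ∧
    ∀ A : Finset V, 2 ≤ A.card → 2 ≤ Aᶜ.card → 4 < (cutEdges G A).card

open scoped Classical
open MeasureTheory

/-- 4-dimensional Euclidean space. -/
abbrev R4 := EuclideanSpace ℝ (Fin 4)

/-- Extension of an assignment `x` of position vectors to the vertices outside `{u,w,z}`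
by `x_w = 0` and `x_z = e` (the value at `u` is irrelevant). -/
noncomputable def extendPos {V : Type*} (u w z : V) (e : R4)
    (x : {v : V // v ≠ u ∧ v ≠ w ∧ v ≠ z} → R4) (v : V) : R4 :=
  if v = w then 0
  else if v = z then e
  else if h : v ≠ u ∧ v ≠ w ∧ v ≠ z then x ⟨v, h⟩ else 0

/-- The position-space integrand of the period: the product over all edges of `Γ` not
meeting `u` of `‖x_i − x_j‖⁻²`. -/
noncomputable def periodIntegrand {V : Type*} [Fintype V] (G : SimpleGraph V)
    (u w z : V) (e : R4) (x : {v : V // v ≠ u ∧ v ≠ w ∧ v ≠ z} → R4) : ℝ :=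
  ∏ ed ∈ G.edgeFinset.filter (fun ed => u ∉ ed),
    Sym2.lift ⟨fun i j => (‖extendPos u w z e x i - extendPos u w z e x j‖ ^ 2)⁻¹,
      fun i j => by simp [norm_sub_rev]⟩ ed

/-- The affine position-space integral `I(u,w,z,e)` of a graph. -/
noncomputable def positionIntegral {V : Type*} [Fintype V] (G : SimpleGraph V)
    (u w z : V) (e : R4) : ℝ :=
  ∫ x : {v : V // v ≠ u ∧ v ≠ w ∧ v ≠ z} → R4, periodIntegrand G u w z e x

/-- The period of a completed primitive graph on `ℓ + 2` vertices, computed in affine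
position space: `P_Γ = π^{−2(ℓ−1)} I(u,w,z,e)`. -/
noncomputable def period {V : Type*} [Fintype V] (G : SimpleGraph V)
    (u w z : V) (e : R4) : ℝ :=
  (Real.pi ^ (2 * (Fintype.card V - 3)))⁻¹ * positionIntegral G u w z e

/-- The permutation `τ` exchanging `a ↔ b` and `c ↔ d`. -/
noncomputable def twistPerm {V : Type*} (a b c d : V) : Equiv.Perm V :=
  (Equiv.swap a b).trans (Equiv.swap c d)

/-- The twisted graph `Γ₀`: the edges of `Γ` with an endpoint in `V₁` or lying inside
`{a,b,c,d}`, together with the images under `τ` of the edges of `Γ` with an endpoint in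
`V₂`. -/
noncomputable def twistGraph {V : Type*} (G : SimpleGraph V) (V₁ V₂ : Finset V)
    (a b c d : V) : SimpleGraph V :=
  SimpleGraph.fromRel (fun x y =>
    (G.Adj x y ∧ (x ∈ V₁ ∨ y ∈ V₁ ∨
      ((x = a ∨ x = b ∨ x = c ∨ x = d) ∧ (y = a ∨ y = b ∨ y = c ∨ y = d)))) ∨
    (G.Adj (twistPerm a b c d x) (twistPerm a b c d y) ∧ (x ∈ V₂ ∨ y ∈ V₂)))

/-- `E'` is obtained from `E` either unchanged, or by replacing the edge `p` by `q`, or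
by replacing the edge `q` by `p`. -/
def SwapOpt {V : Type*} (E : Finset (Sym2 V)) (p q : Sym2 V) (E' : Finset (Sym2 V)) : Prop :=
  E' = E ∨ (p ∈ E ∧ q ∉ E ∧ E' = insert q (E.erase p)) ∨
    (q ∈ E ∧ p ∉ E ∧ E' = insert p (E.erase q))

/-! ### Twists of graphs -/

section Twist

/-- `G'` is a twist of `G` by the involution `τ`, which fixes the set `S` pointwise: the edges of
`G'` are those of `G`, each either kept or replaced by its image under `τ`. Only edges avoiding `S`
may be kept, and only edges with both endpoints in `S` or moved by `τ` may be replaced; an edge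
between two moved vertices is free to do either. -/
structure IsTwist {V : Type*} (τ : Equiv.Perm V) (S : Finset V) (G G' : SimpleGraph V) :
    Prop where
  involutive : Function.Involutive τ
  fixed : ∀ x ∈ S, τ x = x
  exists_bijOn : ∃ f : Sym2 V → Sym2 V, Set.BijOn f G.edgeSet G'.edgeSet ∧
    ∀ x y, G.Adj x y → (x ∉ S ∧ y ∉ S ∧ f s(x, y) = s(x, y)) ∨
      ((x ∈ S ∨ τ x ≠ x) ∧ (y ∈ S ∨ τ y ≠ y) ∧ f s(x, y) = s(τ x, τ y))

variable {V : Type*} {τ : Equiv.Perm V} {S : Finset V} {G G' : SimpleGraph V}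

@[to_additive]
theorem IsTwist.prod_eq [Fintype V] (h : IsTwist τ S G G') {M : Type*} [CommMonoid M]
    {w w' : Sym2 V → M}
    (hout : ∀ x y, x ≠ y → x ∉ S → y ∉ S → w' s(x, y) = w s(x, y))
    (hin : ∀ x y, x ≠ y → (x ∈ S ∨ τ x ≠ x) → (y ∈ S ∨ τ y ≠ y) →
      w' s(τ x, τ y) = w s(x, y)) :
    ∏ ed ∈ G'.edgeFinset, w' ed = ∏ ed ∈ G.edgeFinset, w ed := by
  obtain ⟨f, hf, hfE⟩ := h.exists_bijOn
  refine (Finset.prod_nbij f (fun ed hed => ?_) (by simpa using hf.injOn)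
    (by simpa using hf.surjOn) fun ed hed => ?_).symm
  · exact SimpleGraph.mem_edgeFinset.2 (hf.mapsTo (SimpleGraph.mem_edgeFinset.1 hed))
  · rw [SimpleGraph.mem_edgeFinset] at hed
    induction ed with
    | _ x y =>
      rcases hfE x y hed with ⟨hx, hy, hkept⟩ | ⟨hx, hy, htwisted⟩
      · rw [hkept, hout x y hed.ne hx hy]
      · rw [htwisted, hin x y hed.ne hx hy]

theorem isTwist_map [Fintype V] (hτ : Function.Involutive τ) (G : SimpleGraph V) :
    IsTwist τ {x | τ x = x} G (G.map τ) where
  involutive := hτ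
  fixed x hx := by simpa using hx
  exists_bijOn := by
    refine ⟨Sym2.map τ, ?_, fun x y _ => Or.inr ⟨by simp [em], by simp [em], rfl⟩⟩
    have hmap : (G.map τ).edgeSet = Sym2.map τ '' G.edgeSet :=
      SimpleGraph.edgeSet_map τ.toEmbedding G
    exact hmap ▸ (Sym2.map.injective τ.injective).injOn.bijOn_image

/-- The map on vertex pairs applying `τ` to those that meet `S`; it is involutive when `τ` is an
involution fixing `S`. -/
noncomputable def edgeTwist (τ : Equiv.Perm V) (S : Finset V) (ed : Sym2 V) : Sym2 V :=
  if ∃ x ∈ ed, x ∈ S then ed.map τ else ed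

theorem edgeTwist_mk (x y : V) :
    edgeTwist τ S s(x, y) = if x ∈ S ∨ y ∈ S then s(τ x, τ y) else s(x, y) := by
  simp [edgeTwist, Sym2.map_mk]

theorem apply_mem_iff_of_fixed (hfix : ∀ x ∈ S, τ x = x) (x : V) : τ x ∈ S ↔ x ∈ S :=
  ⟨fun hx => τ.injective (hfix _ hx) ▸ hx, fun hx => (hfix x hx).symm ▸ hx⟩

theorem edgeTwist_involutive (hτ : Function.Involutive τ) (hfix : ∀ x ∈ S, τ x = x) :
    Function.Involutive (edgeTwist τ S) := by
  rintro ⟨x, y⟩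
  change edgeTwist τ S (edgeTwist τ S s(x, y)) = s(x, y)
  by_cases hS : x ∈ S ∨ y ∈ S <;>
    simp only [edgeTwist_mk, hS, if_true, if_false, apply_mem_iff_of_fixed hfix, hτ x, hτ y]

theorem SwapOpt.exists_bijOn {E E' : Finset (Sym2 V)} {p q : Sym2 V} (h : SwapOpt E p q E') :
    ∃ σ : Sym2 V → Sym2 V, Set.BijOn σ E E' ∧
      ∀ ed, σ ed = ed ∨ (ed = p ∧ σ ed = q) ∨ (ed = q ∧ σ ed = p) := by
  have hswap : ∀ ed, Equiv.swap p q ed = ed ∨ (ed = p ∧ Equiv.swap p q ed = q) ∨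
      (ed = q ∧ Equiv.swap p q ed = p) := fun ed => by
    rcases eq_or_ne ed p with rfl | hp
    · simp
    rcases eq_or_ne ed q with rfl | hq
    · simp
    · exact Or.inl (Equiv.swap_apply_of_ne_of_ne hp hq)
  have hbij : (E' : Set (Sym2 V)) = Equiv.swap p q '' E →
      Set.BijOn (Equiv.swap p q) (E : Set (Sym2 V)) E' := fun hE =>
    hE ▸ (Equiv.swap p q).injective.injOn.bijOn_image
  rcases h with rfl | ⟨hp, hq, rfl⟩ | ⟨hq, hp, rfl⟩
  · exact ⟨id, Set.bijOn_id _, fun ed => Or.inl rfl⟩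
  all_goals
    refine ⟨Equiv.swap p q, hbij ?_, hswap⟩
    ext ed
    rw [Equiv.image_eq_preimage_symm, Set.mem_preimage, Equiv.symm_swap]
    rcases hswap ed with h | ⟨rfl, h⟩ | ⟨rfl, h⟩ <;> simp only [h] <;> grind

end Twist

section TwistGraph

variable {V : Type*} {G G' : SimpleGraph V} {V₁ V₂ : Finset V} {a b c d : V}

theorem twistPerm_apply_of_nodup (h : [a, b, c, d].Nodup) :
    twistPerm a b c d a = b ∧ twistPerm a b c d b = a ∧
      twistPerm a b c d c = d ∧ twistPerm a b c d d = c := by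
  simp only [List.nodup_cons, List.mem_cons, List.not_mem_nil, or_false, not_or] at h
  simp only [twistPerm, Equiv.trans_apply, Equiv.swap_apply_def]
  grind

theorem twistPerm_apply_of_ne {x : V} (ha : x ≠ a) (hb : x ≠ b) (hc : x ≠ c) (hd : x ≠ d) :
    twistPerm a b c d x = x := by
  simp [twistPerm, Equiv.swap_apply_of_ne_of_ne ha hb, Equiv.swap_apply_of_ne_of_ne hc hd]

theorem twistPerm_involutive (h : [a, b, c, d].Nodup) :
    Function.Involutive (twistPerm a b c d) := by
  obtain ⟨ha, hb, hc, hd⟩ := twistPerm_apply_of_nodup h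
  intro x
  by_cases hx : x = a ∨ x = b ∨ x = c ∨ x = d
  · rcases hx with rfl | rfl | rfl | rfl <;> simp only [ha, hb, hc, hd]
  · push Not at hx
    simp only [twistPerm_apply_of_ne hx.1 hx.2.1 hx.2.2.1 hx.2.2.2]

theorem twistPerm_ne_self_iff (h : [a, b, c, d].Nodup) {x : V} :
    twistPerm a b c d x ≠ x ↔ x = a ∨ x = b ∨ x = c ∨ x = d := by
  obtain ⟨ha, hb, hc, hd⟩ := twistPerm_apply_of_nodup h
  simp only [List.nodup_cons, List.mem_cons, List.not_mem_nil, or_false, not_or] at h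
  grind [twistPerm_apply_of_ne (x := x) (a := a) (b := b) (c := c) (d := d)]

theorem twistPerm_eq_self_of_mem (hV₂ : a ∉ V₂ ∧ b ∉ V₂ ∧ c ∉ V₂ ∧ d ∉ V₂) {x : V}
    (hx : x ∈ V₂) : twistPerm a b c d x = x :=
  twistPerm_apply_of_ne (fun h => hV₂.1 (h ▸ hx)) (fun h => hV₂.2.1 (h ▸ hx))
    (fun h => hV₂.2.2.1 (h ▸ hx)) fun h => hV₂.2.2.2 (h ▸ hx)

theorem twistGraph_adj (hdisj : Disjoint V₁ V₂)
    (hV₂ : a ∉ V₂ ∧ b ∉ V₂ ∧ c ∉ V₂ ∧ d ∉ V₂)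
    (hcover : ∀ x : V, x ∈ V₁ ∨ x ∈ V₂ ∨ x = a ∨ x = b ∨ x = c ∨ x = d)
    (hsep : ∀ x ∈ V₁, ∀ y ∈ V₂, ¬ G.Adj x y) (x y : V) :
    (twistGraph G V₁ V₂ a b c d).Adj x y ↔
      if x ∈ V₂ ∨ y ∈ V₂ then G.Adj (twistPerm a b c d x) (twistPerm a b c d y)
      else G.Adj x y := by
  have hnotKept : ∀ {x y}, x ∈ V₂ ∨ y ∈ V₂ → G.Adj x y → ¬ (x ∈ V₁ ∨ y ∈ V₁ ∨
      ((x = a ∨ x = b ∨ x = c ∨ x = d) ∧ (y = a ∨ y = b ∨ y = c ∨ y = d))) := by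
    intro x y hxy hadj
    have hadj' := hadj.symm
    have hV₁₂ : ∀ v ∈ V₁, v ∉ V₂ := fun v hv => Finset.disjoint_left.1 hdisj hv
    grind
  simp only [twistGraph, SimpleGraph.fromRel_adj]
  split_ifs with hS
  · refine ⟨?_, fun h => ⟨fun hxy => h.ne (congrArg _ hxy), Or.inl (Or.inr ⟨h, hS⟩)⟩⟩
    rintro ⟨-, (⟨hadj, hkept⟩ | ⟨hadj, -⟩) | (⟨hadj, hkept⟩ | ⟨hadj, -⟩)⟩
    · exact absurd hkept (hnotKept hS hadj)
    · exact hadj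
    · exact absurd hkept (hnotKept hS.symm hadj)
    · exact hadj.symm
  · refine ⟨?_, fun h => ⟨h.ne, Or.inl (Or.inl ⟨h, ?_⟩)⟩⟩
    · rintro ⟨-, (⟨hadj, -⟩ | ⟨-, htwisted⟩) | (⟨hadj, -⟩ | ⟨-, htwisted⟩)⟩
      · exact hadj
      · exact absurd htwisted hS
      · exact hadj.symm
      · exact absurd htwisted.symm hS
    · have hx := hcover x
      have hy := hcover y
      tauto

theorem edgeTwist_bijOn (h : [a, b, c, d].Nodup) (hdisj : Disjoint V₁ V₂)
    (hV₂ : a ∉ V₂ ∧ b ∉ V₂ ∧ c ∉ V₂ ∧ d ∉ V₂)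
    (hcover : ∀ x : V, x ∈ V₁ ∨ x ∈ V₂ ∨ x = a ∨ x = b ∨ x = c ∨ x = d)
    (hsep : ∀ x ∈ V₁, ∀ y ∈ V₂, ¬ G.Adj x y) :
    Set.BijOn (edgeTwist (twistPerm a b c d) V₂) G.edgeSet
      (twistGraph G V₁ V₂ a b c d).edgeSet := by
  have hτ := twistPerm_involutive h
  have hfix : ∀ x ∈ V₂, twistPerm a b c d x = x := fun x => twistPerm_eq_self_of_mem hV₂
  have hinv := edgeTwist_involutive hτ hfix
  have hmem : ∀ ed, edgeTwist (twistPerm a b c d) V₂ ed ∈ (twistGraph G V₁ V₂ a b c d).edgeSet ↔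
      ed ∈ G.edgeSet := fun ed => by
    induction ed with
    | _ x y =>
      by_cases hS : x ∈ V₂ ∨ y ∈ V₂ <;>
        simp only [edgeTwist_mk, hS, if_true, if_false, SimpleGraph.mem_edgeSet,
          twistGraph_adj hdisj hV₂ hcover hsep, apply_mem_iff_of_fixed hfix, hτ x, hτ y]
  exact Set.InvOn.bijOn ⟨fun ed _ => hinv ed, fun ed _ => hinv ed⟩ (fun ed => (hmem ed).2)
    fun ed hed => (hmem _).1 ((hinv ed).symm ▸ hed)

theorem swaps_apply_eq_self_or_twisted (h : [a, b, c, d].Nodup) {σ ρ : Sym2 V → Sym2 V}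
    (hσ : ∀ ed, σ ed = ed ∨ (ed = s(a, c) ∧ σ ed = s(b, d)) ∨ (ed = s(b, d) ∧ σ ed = s(a, c)))
    (hρ : ∀ ed, ρ ed = ed ∨ (ed = s(a, d) ∧ ρ ed = s(b, c)) ∨ (ed = s(b, c) ∧ ρ ed = s(a, d)))
    (x y : V) : ρ (σ s(x, y)) = s(x, y) ∨ (twistPerm a b c d x ≠ x ∧ twistPerm a b c d y ≠ y ∧
      ρ (σ s(x, y)) = s(twistPerm a b c d x, twistPerm a b c d y)) := by
  obtain ⟨ha, hb, hc, hd⟩ := twistPerm_apply_of_nodup h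
  have hmoved : ∀ p q p' q', s(x, y) = s(p, q) → twistPerm a b c d p = p' →
      twistPerm a b c d q = q' → p ≠ p' → q ≠ q' →
      twistPerm a b c d x ≠ x ∧ twistPerm a b c d y ≠ y ∧
        s(p', q') = s(twistPerm a b c d x, twistPerm a b c d y) := by
    rintro p q _ _ hxy rfl rfl hp hq
    rcases Sym2.eq_iff.1 hxy with ⟨rfl, rfl⟩ | ⟨rfl, rfl⟩
    · exact ⟨hp.symm, hq.symm, rfl⟩
    · exact ⟨hq.symm, hp.symm, Sym2.eq_swap⟩
  simp only [List.nodup_cons, List.mem_cons, List.not_mem_nil, or_false, not_or] at h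
  rcases hσ s(x, y) with hσ' | ⟨hxy, hσ'⟩ | ⟨hxy, hσ'⟩ <;>
    rcases hρ (σ s(x, y)) with hρ' | ⟨hxy', hρ'⟩ | ⟨hxy', hρ'⟩
  · exact Or.inl (hρ'.trans hσ')
  · exact Or.inr (hρ' ▸ hmoved _ _ _ _ (hσ' ▸ hxy') ha hd (by tauto) (by tauto))
  · exact Or.inr (hρ' ▸ hmoved _ _ _ _ (hσ' ▸ hxy') hb hc (by tauto) (by tauto))
  · exact Or.inr (hρ'.trans hσ' ▸ hmoved _ _ _ _ hxy ha hc (by tauto) (by tauto))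
  · simp_all
  · simp_all
  · exact Or.inr (hρ'.trans hσ' ▸ hmoved _ _ _ _ hxy hb hd (by tauto) (by tauto))
  · simp_all
  · simp_all

theorem isTwist_of_swapOpt [Fintype V] (h : [a, b, c, d].Nodup) (hdisj : Disjoint V₁ V₂)
    (hV₂ : a ∉ V₂ ∧ b ∉ V₂ ∧ c ∉ V₂ ∧ d ∉ V₂)
    (hcover : ∀ x : V, x ∈ V₁ ∨ x ∈ V₂ ∨ x = a ∨ x = b ∨ x = c ∨ x = d)
    (hsep : ∀ x ∈ V₁, ∀ y ∈ V₂, ¬ G.Adj x y)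
    (hswap : ∃ E₁ : Finset (Sym2 V),
      SwapOpt (twistGraph G V₁ V₂ a b c d).edgeFinset s(a, c) s(b, d) E₁ ∧
      SwapOpt E₁ s(a, d) s(b, c) G'.edgeFinset) :
    IsTwist (twistPerm a b c d) V₂ G G' := by
  have hfix : ∀ x ∈ V₂, twistPerm a b c d x = x := fun x => twistPerm_eq_self_of_mem hV₂
  obtain ⟨E₁, hE₁, hE'⟩ := hswap
  obtain ⟨σ, hσ, hσE⟩ := hE₁.exists_bijOn
  obtain ⟨ρ, hρ, hρE⟩ := hE'.exists_bijOn
  rw [SimpleGraph.coe_edgeFinset] at hσ hρ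
  have hσ_fixed : ∀ ed, (∃ v ∈ ed, v ∈ V₂) → σ ed = ed := fun ed hed => by
    rcases hσE ed with h | ⟨rfl, -⟩ | ⟨rfl, -⟩ <;> simp_all
  have hρ_fixed : ∀ ed, (∃ v ∈ ed, v ∈ V₂) → ρ ed = ed := fun ed hed => by
    rcases hρE ed with h | ⟨rfl, -⟩ | ⟨rfl, -⟩ <;> simp_all
  refine ⟨twistPerm_involutive h, hfix, _,
    (hρ.comp hσ).comp (edgeTwist_bijOn h hdisj hV₂ hcover hsep), fun x y hxy => ?_⟩
  simp only [Function.comp_apply, edgeTwist_mk]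
  split_ifs with hS
  · have htwisted : ∃ v ∈ s(twistPerm a b c d x, twistPerm a b c d y), v ∈ V₂ := by
      simpa [apply_mem_iff_of_fixed hfix] using hS
    have hinner : ∀ u v, G.Adj u v → u ∈ V₂ → v ∈ V₂ ∨ twistPerm a b c d v ≠ v :=
      fun u v huv hu => (hcover v).elim (fun hv => absurd huv.symm (hsep v hv u hu))
        (Or.imp_right (twistPerm_ne_self_iff h).2)
    rw [hσ_fixed _ htwisted, hρ_fixed _ htwisted]
    rcases hS with hx | hy
    · exact Or.inr ⟨Or.inl hx, hinner x y hxy hx, rfl⟩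
    · exact Or.inr ⟨hinner y x hxy.symm hy, Or.inl hy, rfl⟩
  · push Not at hS
    rcases swaps_apply_eq_self_or_twisted h hσE hρE x y with hkept | htwisted
    · exact Or.inl ⟨hS.1, hS.2, hkept⟩
    · exact Or.inr ⟨Or.inr htwisted.1, Or.inr htwisted.2.1, htwisted.2.2⟩

end TwistGraph

/-! ### Edge cuts of twisted graphs -/

section Cuts

variable {V : Type*}

/-- The indicator function of the pairs of vertices separated by `A`. -/
noncomputable def cutIndicator (A : Finset V) (ed : Sym2 V) : ℤ :=
  if ∃ x, x ∈ ed ∧ x ∈ A ∧ ∃ y, y ∈ ed ∧ y ∉ A then 1 else 0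

theorem cutIndicator_mk (A : Finset V) (x y : V) :
    cutIndicator A s(x, y) = if (x ∈ A ↔ y ∈ A) then 0 else 1 := by
  simp only [cutIndicator, Sym2.mem_iff]
  by_cases hx : x ∈ A <;> by_cases hy : y ∈ A <;> simp [hx, hy]

/-- The indicator of the pairs separated by `A` minus the indicator of those containing `q`, so
that its sum over the edges of a graph is the excess of the cut by `A` over the cut isolating
`q`. -/
noncomputable def cutExcess (q : V) (A : Finset V) (ed : Sym2 V) : ℤ :=
  cutIndicator A ed - (ed.map (Pi.single q 1 : V → ℤ)).add

theorem cutExcess_mk (q : V) (A : Finset V) (x y : V) :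
    cutExcess q A s(x, y) = (if (x ∈ A ↔ y ∈ A) then 0 else 1) -
      ((if x = q then 1 else 0) + if y = q then 1 else 0) := by
  simp only [cutExcess, cutIndicator_mk, Sym2.map_mk, Sym2.add_mk, Pi.single_apply]

theorem cutExcess_eq_zero {p x y : V} {A : Finset V} (hxy : x ≠ y) (hx : x ∈ A ↔ x = p)
    (hy : y ∈ A ↔ y = p) : cutExcess p A s(x, y) = 0 := by
  simp only [cutExcess_mk, hx, hy]
  grind

variable [Fintype V] {G : SimpleGraph V}

@[to_additive]
theorem prod_edgeFinset_mul_map {M : Type*} [CommMonoid M] (G : SimpleGraph V) (ψ : V → M) :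
    ∏ ed ∈ G.edgeFinset, (ed.map ψ).mul = ∏ i, ψ i ^ G.degree i := by
  have hmul : ∀ ed ∈ G.edgeFinset, (ed.map ψ).mul = ∏ i, if i ∈ ed then ψ i else 1 := by
    intro ed hed
    induction ed with
    | _ i j =>
      have hij : i ≠ j := G.ne_of_adj (by simpa using hed)
      have hpair : (Finset.univ.filter fun k => k ∈ s(i, j)) = {i, j} := by ext k; simp
      rw [← Finset.prod_filter, hpair, Finset.prod_pair hij, Sym2.map_mk, Sym2.mul_mk]
  rw [Finset.prod_congr rfl hmul, Finset.prod_comm]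
  refine Finset.prod_congr rfl fun i _ => ?_
  rw [← Finset.prod_filter, Finset.prod_const, ← SimpleGraph.card_incidenceFinset_eq_degree,
    SimpleGraph.incidenceFinset_eq_filter]

theorem sum_cutIndicator (G : SimpleGraph V) (A : Finset V) :
    ∑ ed ∈ G.edgeFinset, cutIndicator A ed = (cutEdges G A).card := by
  rw [cutEdges, Finset.card_filter]
  push_cast
  refine Finset.sum_congr rfl fun ed _ => ?_
  rw [cutIndicator]
  congr

theorem card_cutEdges_compl (G : SimpleGraph V) (A : Finset V) :
    (cutEdges G Aᶜ).card = (cutEdges G A).card := by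
  congr 1
  refine Finset.filter_congr fun ed _ => ?_
  simp only [Finset.mem_compl, not_not]
  exact ⟨fun ⟨x, hx, hxA, y, hy, hyA⟩ => ⟨y, hy, hyA, x, hx, hxA⟩,
    fun ⟨x, hx, hxA, y, hy, hyA⟩ => ⟨y, hy, hyA, x, hx, hxA⟩⟩

theorem sum_cutExcess (G : SimpleGraph V) (q : V) (A : Finset V) :
    ∑ ed ∈ G.edgeFinset, cutExcess q A ed = (cutEdges G A).card - G.degree q := by
  simp [cutExcess, Finset.sum_sub_distrib, sum_cutIndicator, sum_edgeFinset_add_map,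
    Pi.single_apply]

theorem card_cutEdges_singleton (G : SimpleGraph V) (v : V) :
    (cutEdges G {v}).card = G.degree v := by
  have hsum := sum_cutExcess G v {v}
  rw [Finset.sum_eq_zero] at hsum
  · omega
  · rintro ⟨x, y⟩ hxy
    exact cutExcess_eq_zero (G.ne_of_adj (SimpleGraph.mem_edgeFinset.1 hxy)) (by simp) (by simp)

theorem le_card_cutEdges {k : ℕ} (hdeg : ∀ v, k ≤ G.degree v)
    (hcut : ∀ A : Finset V, 2 ≤ A.card → 2 ≤ Aᶜ.card → k < (cutEdges G A).card) {A : Finset V}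
    (hA : A.Nonempty) (hA' : Aᶜ.Nonempty) : k ≤ (cutEdges G A).card := by
  have hsingle : ∀ B : Finset V, B.card = 1 → k ≤ (cutEdges G B).card := fun B hB => by
    obtain ⟨v, rfl⟩ := Finset.card_eq_one.1 hB
    exact (hdeg v).trans_eq (card_cutEdges_singleton G v).symm
  rcases eq_or_ne A.card 1 with h | h
  · exact hsingle A h
  rcases eq_or_ne Aᶜ.card 1 with h' | h'
  · exact card_cutEdges_compl G A ▸ hsingle _ h'
  have := hA.card_pos
  have := hA'.card_pos
  exact (hcut A (by omega) (by omega)).le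

theorem connected_of_cutEdges_nonempty [Nonempty V]
    (hcut : ∀ A : Finset V, A.Nonempty → Aᶜ.Nonempty → (cutEdges G A).Nonempty) :
    G.Connected := by
  refine G.connected_iff.2 ⟨fun u v => ?_, inferInstance⟩
  by_contra huv
  obtain ⟨ed, hed⟩ := hcut {x | G.Reachable u x} ⟨u, by simp⟩ ⟨v, by simpa using huv⟩
  obtain ⟨hadj, x, hx, hxA, y, hy, hyA⟩ := Finset.mem_filter.1 hed
  simp only [Finset.mem_filter, Finset.mem_univ, true_and] at hxA hyA
  obtain rfl : ed = s(x, y) := (Sym2.mem_and_mem_iff (by grind)).1 ⟨hx, hy⟩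
  exact hyA (hxA.trans (SimpleGraph.mem_edgeFinset.1 hadj).reachable)

end Cuts

section TwistCuts

theorem twistPerm_mem_cases {V : Type*} [Fintype V] {a b c d : V} (h : [a, b, c, d].Nodup)
    (A : Finset V) :
    (∀ x, twistPerm a b c d x ∈ A ↔ x ∈ A) ∨
    (∀ x, twistPerm a b c d x ≠ x → (twistPerm a b c d x ∈ A ↔ x ∉ A)) ∨
    (∃ q, twistPerm a b c d q ≠ q ∧ ∀ x, twistPerm a b c d x ≠ x → (x ∈ A ↔ x = q)) ∨
    (∃ q, twistPerm a b c d q ≠ q ∧ ∀ x, twistPerm a b c d x ≠ x → (x ∈ Aᶜ ↔ x = q)) := by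
  obtain ⟨ha, hb, hc, hd⟩ := twistPerm_apply_of_nodup h
  have hmoved : ∀ P : V → Prop, (∀ x, twistPerm a b c d x ≠ x → P x) ↔ P a ∧ P b ∧ P c ∧ P d :=
    fun P => by simp [twistPerm_ne_self_iff h]
  have hinv : (∀ x, twistPerm a b c d x ∈ A ↔ x ∈ A) ↔
      ∀ x, twistPerm a b c d x ≠ x → (twistPerm a b c d x ∈ A ↔ x ∈ A) :=
    forall_congr' fun x => ⟨fun hx _ => hx, fun hx => by
      by_cases hfix : twistPerm a b c d x = x
      · rw [hfix]
      · exact hx hfix⟩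
  have hexists : ∀ P : V → Prop, (∃ q, twistPerm a b c d q ≠ q ∧ P q) ↔ P a ∨ P b ∨ P c ∨ P d :=
    fun P => by simp [twistPerm_ne_self_iff h, or_and_right, exists_or]
  simp only [List.nodup_cons, List.mem_cons, List.not_mem_nil, or_false, not_or] at h
  simp only [hinv, hexists, hmoved, ha, hb, hc, hd, Finset.mem_compl]
  grind

theorem exists_twistPerm_ne_self {V : Type*} {a b c d q : V} (h : [a, b, c, d].Nodup)
    (hq : twistPerm a b c d q ≠ q) :
    ∃ p, twistPerm a b c d p ≠ p ∧ p ≠ q ∧ p ≠ twistPerm a b c d q := by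
  obtain ⟨ha, hb, hc, hd⟩ := twistPerm_apply_of_nodup h
  rw [twistPerm_ne_self_iff h] at hq
  simp only [twistPerm_ne_self_iff h]
  simp only [List.nodup_cons, List.mem_cons, List.not_mem_nil, or_false, not_or] at h
  rcases hq with rfl | rfl | rfl | rfl
  · exact ⟨c, by grind⟩
  · exact ⟨c, by grind⟩
  · exact ⟨a, by grind⟩
  · exact ⟨a, by grind⟩

variable {V : Type*} [Fintype V] {G G' : SimpleGraph V} {τ : Equiv.Perm V} {S A : Finset V}

namespace IsTwist

theorem card_cutEdges_of_invariant (h : IsTwist τ S G G') (hA : ∀ x, τ x ∈ A ↔ x ∈ A) :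
    (cutEdges G' A).card = (cutEdges G A).card := by
  zify
  rw [← sum_cutIndicator, ← sum_cutIndicator]
  exact h.sum_eq (fun _ _ _ _ _ => rfl) fun _ _ _ _ _ => by simp only [cutIndicator_mk, hA]

theorem card_cutEdges_of_antiinvariant (h : IsTwist τ S G G')
    (hA : ∀ x, τ x ≠ x → (τ x ∈ A ↔ x ∉ A)) :
    (cutEdges G' A).card = (cutEdges G (symmDiff A S)).card := by
  have hout : ∀ x ∉ S, (x ∈ symmDiff A S ↔ x ∈ A) := fun x hx => by
    simp [Finset.mem_symmDiff, hx]
  have hin : ∀ x, x ∈ S ∨ τ x ≠ x → (x ∈ symmDiff A S ↔ τ x ∉ A) := fun x hx => by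
    have := h.fixed x
    have := hA x
    simp only [Finset.mem_symmDiff]
    grind
  zify
  rw [← sum_cutIndicator, ← sum_cutIndicator]
  refine h.sum_eq (fun x y _ hx hy => ?_) fun x y _ hx hy => ?_
  · simp only [cutIndicator_mk, hout x hx, hout y hy]
  · simp only [cutIndicator_mk, hin x hx, hin y hy, not_iff_not]

theorem cutExcess_of_single (h : IsTwist τ S G G') {q : V} (hq : τ q ≠ q)
    (hA : ∀ x, τ x ≠ x → (x ∈ A ↔ x = q)) :
    ((cutEdges G' A).card - G'.degree q : ℤ) =
      ((cutEdges G (A \ S)).card - G.degree q) +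
      ((cutEdges G (insert (τ q) (A ∩ S))).card - G.degree (τ q)) := by
  have hτq : τ (τ q) = q := h.involutive q
  have hτ_eq : ∀ x, τ x = q ↔ x = τ q := fun x => by rw [← hτq, τ.apply_eq_iff_eq, hτq]
  have houter : ∀ x ∉ S, ((x ∈ A \ S ↔ x ∈ A) ∧ (x ∈ insert (τ q) (A ∩ S) ↔ x = τ q)) :=
    fun x hx => by simp [hx]
  have hinner : ∀ x, x ∈ S ∨ τ x ≠ x →
      ((x ∈ A \ S ↔ x = q) ∧ (x ∈ insert (τ q) (A ∩ S) ↔ τ x ∈ A)) := fun x hx => by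
    have := h.fixed x
    have := hA x
    have := hA (τ x)
    have := h.involutive x
    simp only [Finset.mem_sdiff, Finset.mem_insert, Finset.mem_inter]
    grind
  simp only [← sum_cutExcess]
  rw [← Finset.sum_add_distrib]
  refine h.sum_eq (fun x y hxy hx hy => ?_) fun x y hxy hx hy => ?_
  · rw [cutExcess_eq_zero hxy (houter x hx).2 (houter y hy).2, add_zero]
    simp only [cutExcess_mk, (houter x hx).1, (houter y hy).1]
  · rw [cutExcess_eq_zero hxy (hinner x hx).1 (hinner y hy).1, zero_add]
    simp only [cutExcess_mk, (hinner x hx).2, (hinner y hy).2, hτ_eq]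

theorem lt_card_cutEdges_of_antiinvariant (h : IsTwist τ S G G') {k : ℕ}
    (hcut : ∀ B : Finset V, 2 ≤ B.card → 2 ≤ Bᶜ.card → k < (cutEdges G B).card)
    {p q : V} (hp : τ p ≠ p) (hq : τ q ≠ q) (hpq : p ≠ q) (hpq' : p ≠ τ q)
    (hA : ∀ x, τ x ≠ x → (τ x ∈ A ↔ x ∉ A)) : k < (cutEdges G' A).card := by
  have hτ := h.involutive
  have hmoved : ∀ x, τ x ≠ x → x ∉ S ∧ τ x ∉ S := fun x hx =>
    ⟨fun hxS => hx (h.fixed x hxS), fun hxS => hx (τ.injective (h.fixed _ hxS))⟩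
  have hpick : ∀ x, τ x ≠ x → ∃ y, (y = x ∨ y = τ x) ∧ y ∈ A \ S ∧ τ y ∉ A ∪ S := fun x hx => by
    have := hA x hx
    have := hmoved x hx
    by_cases hxA : x ∈ A
    · exact ⟨x, Or.inl rfl, by grind, by grind⟩
    · exact ⟨τ x, Or.inr rfl, by grind, by rw [hτ x]; grind⟩
  obtain ⟨x, hx, hxA, hτx⟩ := hpick p hp
  obtain ⟨y, hy, hyA, hτy⟩ := hpick q hq
  have hxy : x ≠ y := by
    have := hτ p
    have := hτ q
    grind
  rw [h.card_cutEdges_of_antiinvariant hA]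
  refine hcut _ (Finset.one_lt_card.2 ⟨x, ?_, y, ?_, hxy⟩)
    (Finset.one_lt_card.2 ⟨τ x, ?_, τ y, ?_, τ.injective.ne hxy⟩) <;>
  · simp only [Finset.mem_compl, Finset.mem_symmDiff]
    grind

theorem lt_card_cutEdges_of_single (h : IsTwist τ S G G') {k : ℕ} (hG : ∀ v, G.degree v = k)
    (hG' : ∀ v, G'.degree v = k)
    (hcut : ∀ B : Finset V, 2 ≤ B.card → 2 ≤ Bᶜ.card → k < (cutEdges G B).card)
    {p q : V} (hp : τ p ≠ p) (hq : τ q ≠ q) (hpq : p ≠ q) (hpq' : p ≠ τ q)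
    (hA : ∀ x, τ x ≠ x → (x ∈ A ↔ x = q)) (hAcard : 2 ≤ A.card) : k < (cutEdges G' A).card := by
  have hexcess := h.cutExcess_of_single hq hA
  simp only [hG, hG'] at hexcess
  have hqA : q ∈ A := (hA q hq).2 rfl
  have hqS : q ∉ S := fun hqS => hq (h.fixed q hqS)
  have hpA : p ∉ A := fun hpA => hpq ((hA p hp).1 hpA)
  have hτqA : τ q ∉ A := fun hτq => hq ((hA _ (τ.injective.ne hq)).1 hτq)
  have hle := fun {B} => le_card_cutEdges (G := G) (A := B) (fun v => (hG v).ge) hcut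
  have hle_outer : k ≤ (cutEdges G (A \ S)).card :=
    hle ⟨q, by grind⟩ ⟨p, by simp [hpA]⟩
  have hle_inner : k ≤ (cutEdges G (insert (τ q) (A ∩ S))).card :=
    hle ⟨τ q, by simp⟩ ⟨p, by simp [hpq', hpA]⟩
  suffices k < (cutEdges G (A \ S)).card ∨ k < (cutEdges G (insert (τ q) (A ∩ S))).card by
    omega
  obtain ⟨x, hxA, hxq⟩ := Finset.exists_mem_ne hAcard q
  by_cases hxS : x ∈ S
  · refine Or.inr (hcut _ (Finset.one_lt_card.2 ⟨τ q, by simp, x, by grind, by grind⟩)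
      (Finset.one_lt_card.2 ⟨p, by simp [hpq', hpA], q, by simp [hqS, hq.symm], hpq⟩))
  · refine Or.inl (hcut _ (Finset.one_lt_card.2 ⟨q, by grind, x, by grind, hxq.symm⟩)
      (Finset.one_lt_card.2 ⟨p, by simp [hpA], τ q, by simp [hτqA], hpq'⟩))

end IsTwist

theorem IsTwist.completedPrimitive {a b c d : V} (h : [a, b, c, d].Nodup)
    (hT : IsTwist (twistPerm a b c d) S G G') (hG : CompletedPrimitive G)
    (hreg : ∀ v, G'.degree v = 4) : CompletedPrimitive G' := by
  obtain ⟨hGreg, hconn, hcard, hcutG⟩ := hG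
  have ha : twistPerm a b c d a ≠ a := (twistPerm_ne_self_iff h).2 (Or.inl rfl)
  have hcut : ∀ A : Finset V, 2 ≤ A.card → 2 ≤ Aᶜ.card → 4 < (cutEdges G' A).card := by
    intro A hA hA'
    rcases twistPerm_mem_cases h A with hinv | hanti | ⟨q, hq, hsingle⟩ | ⟨q, hq, hsingle⟩
    · exact hT.card_cutEdges_of_invariant hinv ▸ hcutG A hA hA'
    · obtain ⟨p, hp, hpa, hpb⟩ := exists_twistPerm_ne_self h ha
      exact hT.lt_card_cutEdges_of_antiinvariant hcutG hp ha hpa hpb hanti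
    · obtain ⟨p, hp, hpq, hpq'⟩ := exists_twistPerm_ne_self h hq
      exact hT.lt_card_cutEdges_of_single hGreg hreg hcutG hp hq hpq hpq' hsingle hA
    · obtain ⟨p, hp, hpq, hpq'⟩ := exists_twistPerm_ne_self h hq
      rw [← card_cutEdges_compl]
      exact hT.lt_card_cutEdges_of_single hGreg hreg hcutG hp hq hpq hpq' hsingle hA'
  have := hconn.nonempty
  refine ⟨hreg, connected_of_cutEdges_nonempty fun A hA hA' => ?_, hcard, hcut⟩
  exact Finset.card_pos.1 (four_pos.trans_le (le_card_cutEdges (fun v => (hreg v).ge) hcut hA hA'))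

end TwistCuts

/-! ### Product measures -/

open scoped ENNReal

section ProductMeasure

variable {ι : Type*} [Fintype ι] {X Y : ι → Type*} [∀ i, MeasurableSpace (X i)]
  [∀ i, MeasurableSpace (Y i)] {μ : ∀ i, Measure (X i)} {ν : ∀ i, Measure (Y i)}

theorem lmarginal_prod [∀ i, SigmaFinite (μ i)] {f : ∀ i, X i → ℝ≥0∞}
    (hf : ∀ i, Measurable (f i)) (s : Finset ι) (x : ∀ i, X i) :
    (∫⋯∫⁻_s, (fun y => ∏ i, f i (y i)) ∂μ) x =
      ∏ i, if i ∈ s then ∫⁻ t, f i t ∂μ i else f i (x i) := by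
  have hmeas : Measurable fun y : ∀ i, X i => ∏ i, f i (y i) :=
    Finset.measurable_prod _ fun i _ => (hf i).comp (measurable_pi_apply i)
  induction s using Finset.induction_on generalizing x with
  | empty => simp
  | insert i s hi ih =>
    have hrest : ∀ t, ∏ j ∈ Finset.univ.erase i,
        (if j ∈ s then ∫⁻ y, f j y ∂μ j else f j (Function.update x i t j)) =
        ∏ j ∈ Finset.univ.erase i,
          if j ∈ insert i s then ∫⁻ y, f j y ∂μ j else f j (x j) := fun t =>
      Finset.prod_congr rfl fun j hj => by simp [Finset.ne_of_mem_erase hj]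
    rw [lmarginal_insert _ hmeas hi, ← Finset.mul_prod_erase _ _ (Finset.mem_univ i)]
    simp_rw [ih, ← Finset.mul_prod_erase _ _ (Finset.mem_univ i), hrest]
    simp only [hi, if_false, Function.update_self, Finset.mem_insert_self, if_true]
    exact lintegral_mul_const _ (hf i)

theorem lintegral_pi_prod [∀ i, SigmaFinite (μ i)] {f : ∀ i, X i → ℝ≥0∞}
    (hf : ∀ i, Measurable (f i)) :
    ∫⁻ x, ∏ i, f i (x i) ∂Measure.pi μ = ∏ i, ∫⁻ t, f i t ∂μ i := by
  rcases isEmpty_or_nonempty (∀ i, X i) with hempty | ⟨⟨x⟩⟩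
  · obtain ⟨i, hi⟩ := isEmpty_pi.1 hempty
    rw [lintegral_of_isEmpty, Finset.prod_eq_zero (Finset.mem_univ i) (lintegral_of_isEmpty _ _)]
  · simp [lintegral_eq_lmarginal_univ x, lmarginal_prod hf]

theorem pi_withDensity [∀ i, SigmaFinite (μ i)] {J : ∀ i, X i → ℝ≥0∞}
    [∀ i, SigmaFinite ((μ i).withDensity (J i))] (hJ : ∀ i, Measurable (J i)) :
    Measure.pi (fun i => (μ i).withDensity (J i)) =
      (Measure.pi μ).withDensity fun x => ∏ i, J i (x i) := by
  refine Measure.pi_eq fun s hs => ?_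
  have hindicator : ∀ x : ∀ i, X i, (Set.univ.pi s).indicator (fun x => ∏ i, J i (x i)) x =
      ∏ i, (s i).indicator (J i) (x i) := fun x => by
    simp [Set.indicator_apply, Finset.prod_ite_zero]
  rw [withDensity_apply _ (MeasurableSet.univ_pi hs),
    ← lintegral_indicator (MeasurableSet.univ_pi hs)]
  simp_rw [hindicator]
  rw [lintegral_pi_prod fun i => (hJ i).indicator (hs i)]
  exact Finset.prod_congr rfl fun i _ => by
    rw [lintegral_indicator (hs i), withDensity_apply _ (hs i)]

theorem lintegral_pi_eq_of_map_withDensity [∀ i, SigmaFinite (μ i)] [hν : ∀ i, SigmaFinite (ν i)]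
    {φ : ∀ i, X i → Y i} {J : ∀ i, X i → ℝ≥0∞} (hφ : ∀ i, Measurable (φ i))
    (hJ : ∀ i, Measurable (J i)) (hmap : ∀ i, ((μ i).withDensity (J i)).map (φ i) = ν i)
    {F : (∀ i, X i) → ℝ≥0∞} {F' : (∀ i, Y i) → ℝ≥0∞} (hF' : Measurable F')
    (hF : ∀ᵐ x ∂Measure.pi μ, F x = (∏ i, J i (x i)) * F' fun i => φ i (x i)) :
    ∫⁻ x, F x ∂Measure.pi μ = ∫⁻ y, F' y ∂Measure.pi ν := by
  have hσ : ∀ i, SigmaFinite (((μ i).withDensity (J i)).map (φ i)) := fun i => hmap i ▸ hν i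
  have hσ' : ∀ i, SigmaFinite ((μ i).withDensity (J i)) := fun i =>
    (hσ i).of_map _ (hφ i).aemeasurable
  have hprod : Measurable fun x : ∀ i, X i => ∏ i, J i (x i) :=
    Finset.measurable_prod _ fun i _ => (hJ i).comp (measurable_pi_apply i)
  have hΦ : Measurable fun (x : ∀ i, X i) i => φ i (x i) :=
    measurable_pi_lambda _ fun i => (hφ i).comp (measurable_pi_apply i)
  calc ∫⁻ x, F x ∂Measure.pi μ
      = ∫⁻ x, (∏ i, J i (x i)) * F' (fun i => φ i (x i)) ∂Measure.pi μ := lintegral_congr_ae hF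
    _ = ∫⁻ x, F' (fun i => φ i (x i)) ∂Measure.pi fun i => (μ i).withDensity (J i) := by
      rw [pi_withDensity hJ]
      exact (lintegral_withDensity_eq_lintegral_mul _ hprod (hF'.comp hΦ)).symm
    _ = ∫⁻ y, F' y ∂Measure.pi ν := by
      rw [← funext hmap, ← Measure.pi_map_pi fun i => (hφ i).aemeasurable, lintegral_map hF' hΦ]

theorem lintegral_pi_eq_lintegral_dirac [∀ i, SigmaFinite (μ i)] {F : (∀ i, X i) → ℝ≥0∞}
    (hF : Measurable F) (v : ι) :
    ∫⁻ x, F x ∂Measure.pi μ =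
      ∫⁻ t, ∫⁻ x, F x ∂Measure.pi (Function.update μ v (Measure.dirac t)) ∂μ v := by
  rcases isEmpty_or_nonempty (∀ i, X i) with hempty | ⟨⟨x⟩⟩
  · simp [lintegral_of_isEmpty]
  rw [lintegral_eq_lmarginal_univ x, lmarginal_erase _ hF (Finset.mem_univ v)]
  refine lintegral_congr fun t => ?_
  have hσ : ∀ i, SigmaFinite (Function.update μ v (Measure.dirac t) i) := fun i => by
    rcases eq_or_ne i v with rfl | hi
    · rw [Function.update_self]; infer_instance
    · rw [Function.update_of_ne hi]; infer_instance
  have hothers : (fun i : (Finset.univ.erase v : Finset ι) => μ i) =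
      fun i : (Finset.univ.erase v : Finset ι) => Function.update μ v (Measure.dirac t) i :=
    funext fun i => (Function.update_of_ne (Finset.ne_of_mem_erase i.2) _ _).symm
  rw [lintegral_eq_lmarginal_univ (Function.update x v t),
    lmarginal_erase _ hF (Finset.mem_univ v), Function.update_self, lintegral_dirac' _ ?_]
  · simp only [lmarginal, hothers, Function.update_idem]
  · exact (hF.lmarginal _).comp (measurable_update _)

theorem pi_dirac (y : ∀ i, X i) :
    Measure.pi (fun i => Measure.dirac (y i)) = Measure.dirac y :=
  Measure.pi_eq fun s hs => by
    simp [Measure.dirac_apply' _ (MeasurableSet.univ_pi hs), Measure.dirac_apply' _ (hs _),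
      Set.indicator_apply, Finset.prod_ite_zero]

theorem map_extend_pi_of_dirac [∀ i, SigmaFinite (μ i)] (p : ι → Prop) [DecidablePred p]
    (y : ∀ i, X i) (hμ : ∀ i, ¬ p i → μ i = Measure.dirac (y i)) :
    (Measure.pi fun i : Subtype p => μ i).map
      (fun x i => if h : p i then x ⟨i, h⟩ else y i) = Measure.pi μ := by
  have hdirac : (fun i : {i // ¬ p i} => μ i) = fun i : {i // ¬ p i} => Measure.dirac (y i) :=
    funext fun i => hμ i i.2
  rw [← (measurePreserving_piEquivPiSubtypeProd μ p).symm.map_eq, hdirac, pi_dirac,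
    Measure.prod_dirac, Measure.map_map (MeasurableEquiv.measurable _) (by fun_prop)]
  rfl

end ProductMeasure

/-! ### Integration over vertex positions -/

section Gauge

variable {V E : Type*} [Zero E]

/-- The gauge in which `w` sits at `0` and `z` at `e`. The vertex `u` is thought of as the point at
infinity; its recorded position `0` never enters the integrand. -/
noncomputable def gaugePos (u w z : V) (e : E) (v : V) : Option E :=
  if v = z then some e else if v = u ∨ v = w then some 0 else none

theorem gaugePos_eq_none {u w z v : V} {e : E} :
    gaugePos u w z e v = none ↔ v ≠ u ∧ v ≠ w ∧ v ≠ z := by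
  unfold gaugePos
  split_ifs <;> simp <;> tauto

theorem gaugePos_equiv {W : Type*} (σ : V ≃ W) (u w z v : V) (e : E) :
    gaugePos (σ u) (σ w) (σ z) e (σ v) = gaugePos u w z e v := by
  simp only [gaugePos, σ.apply_eq_iff_eq]

end Gauge

section VertexPositions

variable {V E : Type*} [MeasureSpace E]

/-- Lebesgue measure for a free vertex, a point mass for a vertex with prescribed position. -/
noncomputable def vertexMeasure : Option E → Measure E
  | none => volume
  | some p => Measure.dirac p

instance vertexMeasure.sigmaFinite [SigmaFinite (volume : Measure E)] (p : Option E) :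
    SigmaFinite (vertexMeasure p) := by
  cases p <;> unfold vertexMeasure <;> infer_instance

/-- The measure on vertex positions in which the vertices with `P i = some p` are fixed at `p` and
all others are integrated over. -/
noncomputable def posMeasure [Fintype V] (P : V → Option E) : Measure (V → E) :=
  Measure.pi fun i => vertexMeasure (P i)

variable [Fintype V] [SigmaFinite (volume : Measure E)]

theorem lintegral_posMeasure_fix {P : V → Option E} {v : V} (hv : P v = none)
    {F : (V → E) → ℝ≥0∞} (hF : Measurable F) :
    ∫⁻ x, F x ∂posMeasure P = ∫⁻ t, ∫⁻ x, F x ∂posMeasure (Function.update P v (some t)) := by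
  have hupdate : ∀ t : E, posMeasure (Function.update P v (some t)) =
      Measure.pi (Function.update (fun i => vertexMeasure (P i)) v (Measure.dirac t)) := fun t =>
    congrArg Measure.pi (funext fun i => Function.apply_update (fun _ => vertexMeasure) P v _ i)
  simp_rw [hupdate]
  rw [posMeasure, lintegral_pi_eq_lintegral_dirac hF v, hv]
  rfl

theorem ae_posMeasure [MeasurableSingletonClass E] (P : V → Option E) {p : E → Prop}
    (hp : ∀ᵐ y, p y) :
    ∀ᵐ x ∂posMeasure P, ∀ i, (∀ q, P i = some q → x i = q) ∧ (P i = none → p (x i)) := by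
  refine ae_all_iff.2 fun i => ?_
  have hvertex : ∀ᵐ y ∂vertexMeasure (P i), (∀ q, P i = some q → y = q) ∧ (P i = none → p y) := by
    cases P i with
    | none => simpa [vertexMeasure] using hp
    | some q => simp [vertexMeasure]
  exact (Measure.tendsto_eval_ae_ae (μ := fun i => vertexMeasure (P i)) (i := i)).eventually hvertex

theorem lintegral_posMeasure_comp_equiv {W : Type*} [Fintype W] (σ : V ≃ W) (P : W → Option E)
    (F : (V → E) → ℝ≥0∞) :
    ∫⁻ x, F (x ∘ σ) ∂posMeasure P = ∫⁻ x, F x ∂posMeasure (P ∘ σ) := by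
  have hpres := measurePreserving_piCongrLeft (fun i => vertexMeasure (P i)) σ
  have hcomp : ∀ x : V → E, MeasurableEquiv.piCongrLeft (fun _ => E) σ x ∘ σ = x := fun x =>
    funext fun i => Equiv.piCongrLeft_apply_apply (fun _ => E) σ x i
  rw [posMeasure, ← hpres.lintegral_comp_emb (MeasurableEquiv.measurableEmbedding _)]
  simp_rw [hcomp]
  rfl

end VertexPositions

theorem measurable_extendPos {V : Type*} (u w z : V) (e : R4) :
    Measurable (extendPos u w z e) := by
  refine measurable_pi_lambda _ fun v => ?_
  unfold extendPos
  split_ifs <;> fun_prop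

theorem map_extendPos {V : Type*} [Fintype V] {u w z : V} (hwz : w ≠ z) (e : R4) :
    (volume : Measure ({v : V // v ≠ u ∧ v ≠ w ∧ v ≠ z} → R4)).map (extendPos u w z e) =
      posMeasure (gaugePos u w z e) := by
  have hfree : (fun _ : {v : V // v ≠ u ∧ v ≠ w ∧ v ≠ z} => (volume : Measure R4)) =
      fun i : {v : V // v ≠ u ∧ v ≠ w ∧ v ≠ z} => vertexMeasure (gaugePos u w z e i) :=
    funext fun i => by rw [gaugePos_eq_none.2 i.2]; rfl
  have hext : extendPos u w z e = fun x v =>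
      if h : v ≠ u ∧ v ≠ w ∧ v ≠ z then x ⟨v, h⟩ else if v = z then e else 0 := by
    ext x v
    unfold extendPos
    grind
  rw [volume_pi, hfree, hext]
  refine map_extend_pi_of_dirac (μ := fun v => vertexMeasure (gaugePos u w z e v)) _ _
    fun v hv => ?_
  unfold gaugePos
  split_ifs <;> first | rfl | tauto

/-! ### Feynman integrands on the light cone -/

section LightCone

variable {V E : Type*} [NormedAddCommGroup E] [InnerProductSpace ℝ E]

/-- The symmetric bilinear form of signature `(n + 1, 1)`, up to sign, whose light cone is the
conformal compactification of `E`; it takes the value `‖x - y‖²` on the points `conePoint x` and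
`conePoint y`. -/
noncomputable def coneForm (ξ η : ℝ × E × ℝ) : ℝ :=
  ξ.1 * η.2.2 + ξ.2.2 * η.1 - 2 * inner ℝ ξ.2.1 η.2.1

theorem coneForm_comm (ξ η : ℝ × E × ℝ) : coneForm ξ η = coneForm η ξ := by
  rw [coneForm, coneForm, real_inner_comm]
  ring

theorem coneForm_smul_smul (s t : ℝ) (ξ η : ℝ × E × ℝ) :
    coneForm (s • ξ) (t • η) = s * t * coneForm ξ η := by
  simp only [coneForm, Prod.smul_fst, Prod.smul_snd, smul_eq_mul, real_inner_smul_left,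
    real_inner_smul_right]
  ring

/-- The point of the light cone representing `y`. -/
noncomputable def conePoint (y : E) : ℝ × E × ℝ := (1, y, ‖y‖ ^ 2)

/-- The light cone representatives of the positions `x`, with the vertex `u` at infinity. -/
noncomputable def coneLift (u : V) (x : V → E) (i : V) : ℝ × E × ℝ :=
  if i = u then (0, 0, 1) else conePoint (x i)

theorem coneForm_coneLift (u : V) (x : V → E) (i j : V) :
    coneForm (coneLift u x i) (coneLift u x j) =
      if i = u then if j = u then 0 else 1 else if j = u then 1 else ‖x i - x j‖ ^ 2 := by
  unfold coneLift
  split_ifs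
  · simp [coneForm]
  · simp [coneForm, conePoint]
  · simp [coneForm, conePoint]
  · simp only [coneForm, conePoint, norm_sub_sq_real]
    ring

/-- The propagator of an edge, `1 / ‖x i - x j‖²` in terms of light cone representatives. -/
noncomputable def propagator (ξ : V → ℝ × E × ℝ) : Sym2 V → ℝ :=
  Sym2.lift ⟨fun i j => (coneForm (ξ i) (ξ j))⁻¹, fun i j => by simp only [coneForm_comm]⟩

theorem propagator_mk (ξ : V → ℝ × E × ℝ) (i j : V) :
    propagator ξ s(i, j) = (coneForm (ξ i) (ξ j))⁻¹ := rfl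

theorem propagator_smul (κ : V → ℝ) (ξ : V → ℝ × E × ℝ) (ed : Sym2 V) :
    propagator (fun i => κ i • ξ i) ed = (ed.map fun i => (κ i)⁻¹).mul * propagator ξ ed := by
  induction ed with
  | _ i j =>
    rw [propagator_mk, propagator_mk, coneForm_smul_smul, mul_inv, mul_inv]
    rfl

theorem propagator_coneLift_nonneg (u : V) (x : V → E) (ed : Sym2 V) :
    0 ≤ propagator (coneLift u x) ed := by
  induction ed with
  | _ i j =>
    rw [propagator_mk, coneForm_coneLift]
    split_ifs <;> positivity

theorem measurable_propagator_coneLift [MeasurableSpace E] [BorelSpace E]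
    [SecondCountableTopology E] (u : V) (ed : Sym2 V) :
    Measurable fun x : V → E => propagator (coneLift u x) ed := by
  induction ed with
  | _ i j =>
    simp only [propagator_mk, coneForm_coneLift]
    split_ifs <;> fun_prop

variable [Fintype V]

/-- The integrand of the period of `G` for the light cone representatives `ξ` of the vertex
positions. -/
noncomputable def feynmanIntegrand (G : SimpleGraph V) (ξ : V → ℝ × E × ℝ) : ℝ :=
  ∏ ed ∈ G.edgeFinset, propagator ξ ed

theorem feynmanIntegrand_smul (G : SimpleGraph V) (κ : V → ℝ) (ξ : V → ℝ × E × ℝ) :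
    feynmanIntegrand G (fun i => κ i • ξ i) =
      (∏ i, (κ i)⁻¹ ^ G.degree i) * feynmanIntegrand G ξ := by
  simp only [feynmanIntegrand, propagator_smul, Finset.prod_mul_distrib, prod_edgeFinset_mul_map]

theorem feynmanIntegrand_map {W : Type*} [Fintype W] (σ : V ≃ W) (G : SimpleGraph V)
    (ξ : W → ℝ × E × ℝ) : feynmanIntegrand (G.map σ) ξ = feynmanIntegrand G (ξ ∘ σ) := by
  have hmap : (G.map σ).edgeFinset = G.edgeFinset.map σ.toEmbedding.sym2Map := by
    rw [← Finset.coe_inj, SimpleGraph.coe_edgeFinset, Finset.coe_map, SimpleGraph.coe_edgeFinset]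
    exact SimpleGraph.edgeSet_map σ.toEmbedding G
  refine (Finset.prod_congr (by convert hmap) fun _ _ => rfl).trans ((Finset.prod_map ..).trans ?_)
  refine Finset.prod_congr rfl fun ed _ => ?_
  induction ed with
  | _ i j => rfl

theorem feynmanIntegrand_coneLift_nonneg (G : SimpleGraph V) (u : V) (x : V → E) :
    0 ≤ feynmanIntegrand G (coneLift u x) :=
  Finset.prod_nonneg fun ed _ => propagator_coneLift_nonneg u x ed

theorem measurable_feynmanIntegrand_coneLift [MeasurableSpace E] [BorelSpace E]
    [SecondCountableTopology E] (G : SimpleGraph V) (u : V) :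
    Measurable fun x : V → E => feynmanIntegrand G (coneLift u x) :=
  Finset.measurable_prod _ fun ed _ => measurable_propagator_coneLift u ed

theorem IsTwist.feynmanIntegrand_eq {τ : Equiv.Perm V} {S : Finset V} {G G' : SimpleGraph V}
    (h : IsTwist τ S G G') {L : ℝ × E × ℝ → ℝ × E × ℝ}
    (hL : ∀ ξ η, coneForm (L ξ) (L η) = coneForm ξ η) {ξ ξ' : V → ℝ × E × ℝ}
    (hout : ∀ i ∉ S, ξ' i = ξ i) (hin : ∀ i, i ∈ S ∨ τ i ≠ i → ξ' (τ i) = L (ξ i)) :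
    feynmanIntegrand G' ξ' = feynmanIntegrand G ξ :=
  h.prod_eq (fun i j _ hi hj => by simp only [propagator_mk, hout i hi, hout j hj])
    fun i j _ hi hj => by simp only [propagator_mk, hin i hi, hin j hj, hL]

end LightCone

/-! ### The twist map -/

section TwistMap

variable {E : Type*} [NormedAddCommGroup E]

/-- The conformal factor at `y` of the inversion in the sphere of radius `r` about `0`. -/
noncomputable def twistFactor (r : ℝ) (y : E) : ℝ := (r / ‖y‖) ^ 2

theorem twistFactor_nonneg (r : ℝ) (y : E) : 0 ≤ twistFactor r y := sq_nonneg _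

theorem twistFactor_ne_zero {r : ℝ} (hr : r ≠ 0) {y : E} (hy : y ≠ 0) : twistFactor r y ≠ 0 :=
  pow_ne_zero 2 (div_ne_zero hr (norm_ne_zero_iff.2 hy))

theorem measurable_twistFactor [MeasurableSpace E] [OpensMeasurableSpace E] (r : ℝ) :
    Measurable (twistFactor r : E → ℝ) := by
  unfold twistFactor
  fun_prop

variable [InnerProductSpace ℝ E]

/-- Inversion in the sphere of radius `r` about `0`, followed by the linear isometry `R`. -/
noncomputable def twistMap (R : E ≃ₗᵢ[ℝ] E) (r : ℝ) (y : E) : E :=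
  R (EuclideanGeometry.inversion 0 r y)

/-- The linear map of the light cone inducing `twistMap R r`. -/
noncomputable def coneTwist (R : E ≃ₗᵢ[ℝ] E) (r : ℝ) : (ℝ × E × ℝ) →ₗ[ℝ] (ℝ × E × ℝ) where
  toFun ξ := (ξ.2.2 / r ^ 2, R ξ.2.1, r ^ 2 * ξ.1)
  map_add' ξ η := by simp [add_div, mul_add]
  map_smul' t ξ := by simp [mul_div_assoc, mul_left_comm]

variable (R : E ≃ₗᵢ[ℝ] E) {r : ℝ}

theorem coneForm_coneTwist (hr : r ≠ 0) (ξ η : ℝ × E × ℝ) :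
    coneForm (coneTwist R r ξ) (coneTwist R r η) = coneForm ξ η := by
  simp only [coneForm, coneTwist, LinearMap.coe_mk, AddHom.coe_mk, R.inner_map_map]
  field_simp
  ring

theorem conePoint_twistMap (hr : r ≠ 0) {y : E} (hy : y ≠ 0) :
    conePoint (twistMap R r y) = twistFactor r y • coneTwist R r (conePoint y) := by
  have hy' := norm_ne_zero_iff.2 hy
  simp only [conePoint, twistFactor, coneTwist, twistMap, EuclideanGeometry.inversion,
    LinearMap.coe_mk, AddHom.coe_mk, Prod.smul_mk, smul_eq_mul, dist_zero_right, vsub_eq_sub,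
    sub_zero, vadd_eq_add, add_zero, map_smul, norm_smul, R.norm_map, norm_pow, norm_div,
    Real.norm_eq_abs, abs_norm, div_pow, sq_abs]
  congr 2 <;> field_simp

theorem coneTwist_infinity : coneTwist R r (0, 0, 1) = (r ^ 2)⁻¹ • conePoint 0 := by
  simp [coneTwist, conePoint]

theorem coneTwist_conePoint_zero : coneTwist R r (conePoint 0) = r ^ 2 • (0, 0, 1) := by
  simp [coneTwist, conePoint]

theorem exists_isometry_swap {p q : E} (h : ‖p‖ = ‖q‖) :
    ∃ R : E ≃ₗᵢ[ℝ] E, R p = q ∧ R q = p := by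
  have hpq : (ℝ ∙ (p - q))ᗮ.reflection p = q := Submodule.reflection_sub h
  exact ⟨_, hpq, by simpa only [hpq] using Submodule.reflection_reflection (ℝ ∙ (p - q))ᗮ p⟩

theorem exists_twistMap_swap {p q : E} (hr : r ≠ 0) (hpq : ‖p‖ * ‖q‖ = r ^ 2) :
    ∃ R : E ≃ₗᵢ[ℝ] E, twistMap R r p = q ∧ twistMap R r q = p := by
  have hp : ‖p‖ ≠ 0 := left_ne_zero_of_mul (hpq ▸ pow_ne_zero 2 hr)
  have hq : ‖q‖ ≠ 0 := right_ne_zero_of_mul (hpq ▸ pow_ne_zero 2 hr)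
  have hinv : ∀ y : E, EuclideanGeometry.inversion 0 r y = (r / ‖y‖) ^ 2 • y := fun y => by
    simp [EuclideanGeometry.inversion]
  obtain ⟨R, hRp, hRq⟩ := exists_isometry_swap (p := (r / ‖p‖) ^ 2 • p) (q := q) <| by
    rw [norm_smul, norm_pow, norm_div, norm_norm, Real.norm_eq_abs, div_pow, sq_abs, ← hpq]
    field_simp
  refine ⟨R, by rw [twistMap, hinv, hRp], ?_⟩
  rw [twistMap, hinv, map_smul, hRq, smul_smul, ← mul_pow, div_mul_div_comm, ← pow_two, ← hpq,
    mul_comm, div_self (mul_ne_zero hq hp), one_pow, one_smul]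

variable [FiniteDimensional ℝ E]

theorem abs_det_fderiv_inversion (r : ℝ) (y : E) :
    |((r / dist y 0) ^ 2 • ((ℝ ∙ (y - 0))ᗮ.reflection : E →L[ℝ] E)).det| =
      twistFactor r y ^ Module.finrank ℝ E := by
  have hdet : ContinuousLinearMap.det ((ℝ ∙ (y - 0))ᗮ.reflection : E →L[ℝ] E) =
      LinearMap.det (ℝ ∙ (y - 0))ᗮ.reflection.toLinearMap := rfl
  rw [ContinuousLinearMap.det, ContinuousLinearMap.toLinearMap_smul, LinearMap.det_smul]
  rw [← ContinuousLinearMap.det, hdet, Submodule.det_reflection, abs_mul, abs_pow, abs_pow]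
  simp [twistFactor]

variable [MeasurableSpace E] [BorelSpace E]

theorem measurable_inversion (r : ℝ) : Measurable (EuclideanGeometry.inversion (0 : E) r) := by
  unfold EuclideanGeometry.inversion
  simp only [vsub_eq_sub, vadd_eq_add, sub_zero, add_zero]
  fun_prop

theorem measurable_twistMap (R : E ≃ₗᵢ[ℝ] E) (r : ℝ) : Measurable (twistMap R r) :=
  R.continuous.measurable.comp (measurable_inversion r)

theorem map_withDensity_inversion [Nontrivial E] (hr : r ≠ 0) :
    ((volume : Measure E).withDensity
      fun y => ENNReal.ofReal (twistFactor r y ^ Module.finrank ℝ E)).map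
      (EuclideanGeometry.inversion 0 r) = volume := by
  have himage : EuclideanGeometry.inversion (0 : E) r '' {0}ᶜ = {0}ᶜ := by
    rw [Set.image_compl_eq (EuclideanGeometry.inversion_bijective 0 hr), Set.image_singleton,
      EuclideanGeometry.inversion_self]
  have hjacobian := map_withDensity_abs_det_fderiv_eq_addHaar (volume : Measure E)
    (measurableSet_singleton (0 : E)).compl.nullMeasurableSet
    (fun y hy => (EuclideanGeometry.hasFDerivAt_inversion (R := r) hy).hasFDerivWithinAt)
    (EuclideanGeometry.inversion_injective 0 hr).injOn
  simpa only [abs_det_fderiv_inversion, himage, restrict_compl_singleton] using hjacobian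

theorem map_withDensity_twistMap [Nontrivial E] (R : E ≃ₗᵢ[ℝ] E) (hr : r ≠ 0) :
    ((volume : Measure E).withDensity
      fun y => ENNReal.ofReal (twistFactor r y ^ Module.finrank ℝ E)).map (twistMap R r) =
      volume := by
  have hcomp : twistMap R r = R ∘ EuclideanGeometry.inversion 0 r := rfl
  rw [hcomp, ← Measure.map_map R.continuous.measurable (measurable_inversion r),
    map_withDensity_inversion hr, R.measurePreserving.map_eq]

end TwistMap

section TwistedIntegrand

variable {V : Type*} {a b c d : V}

/-- The rescaling of the light cone representatives of `a, b, c, d` at `∞, 0, e, t`, where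
`‖e‖ = 1` and `‖t‖ = r ^ 2`, for which `coneTwist R r` permutes them without further factors. -/
noncomputable def twistScale (a b c d : V) (r : ℝ) (i : V) : ℝ :=
  if i = a ∨ i = c then r else if i = b ∨ i = d then r⁻¹ else 1

theorem twistScale_of_fixed (h : [a, b, c, d].Nodup) (r : ℝ) {i : V}
    (hi : twistPerm a b c d i = i) : twistScale a b c d r i = 1 := by
  have hne := (twistPerm_ne_self_iff h).not.1 (not_not.2 hi)
  unfold twistScale
  grind

theorem twistScale_apply_of_nodup (h : [a, b, c, d].Nodup) (r : ℝ) :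
    twistScale a b c d r a = r ∧ twistScale a b c d r b = r⁻¹ ∧
      twistScale a b c d r c = r ∧ twistScale a b c d r d = r⁻¹ := by
  simp only [List.nodup_cons, List.mem_cons, List.not_mem_nil, or_false, not_or] at h
  unfold twistScale
  grind

theorem prod_twistScale_pow [Fintype V] (h : [a, b, c, d].Nodup) {r : ℝ} (hr : r ≠ 0) (n : ℕ) :
    ∏ i, twistScale a b c d r i ^ n = 1 := by
  obtain ⟨hτa, hτb, hτc, hτd⟩ := twistPerm_apply_of_nodup h
  obtain ⟨hκa, hκb, hκc, hκd⟩ := twistScale_apply_of_nodup h r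
  refine Finset.prod_involution (fun i _ => twistPerm a b c d i) (fun i _ => ?_)
    (fun i _ hi hfix => hi ?_) (fun i _ => Finset.mem_univ _) fun i _ => twistPerm_involutive h i
  · rw [← mul_pow]
    by_cases hfix : twistPerm a b c d i = i
    · rw [hfix, twistScale_of_fixed h r hfix, one_mul, one_pow]
    · rcases (twistPerm_ne_self_iff h).1 hfix with rfl | rfl | rfl | rfl <;>
        simp only [hτa, hτb, hτc, hτd, hκa, hκb, hκc, hκd, mul_inv_cancel₀ hr,
          inv_mul_cancel₀ hr, one_pow]
  · rw [twistScale_of_fixed h r hfix, one_pow]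

variable {E : Type*} [NormedAddCommGroup E] [InnerProductSpace ℝ E] {R : E ≃ₗᵢ[ℝ] E} {r : ℝ}
  {x : V → E}

theorem coneTwist_twistScale_smul (h : [a, b, c, d].Nodup) (hr : r ≠ 0) (hb : x b = 0)
    (hc : ‖x c‖ = 1) (hd : ‖x d‖ = r ^ 2) (hcd : twistMap R r (x c) = x d)
    (hdc : twistMap R r (x d) = x c) {i : V} (hi : twistPerm a b c d i ≠ i) :
    twistScale a b c d r (twistPerm a b c d i) • coneLift a x (twistPerm a b c d i) =
      coneTwist R r (twistScale a b c d r i • coneLift a x i) := by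
  obtain ⟨hτa, hτb, hτc, hτd⟩ := twistPerm_apply_of_nodup h
  obtain ⟨hκa, hκb, hκc, hκd⟩ := twistScale_apply_of_nodup h r
  have hlift : coneLift a x b = conePoint 0 ∧ coneLift a x c = conePoint (x c) ∧
      coneLift a x d = conePoint (x d) := by
    simp only [List.nodup_cons, List.mem_cons, List.not_mem_nil, or_false, not_or] at h
    unfold coneLift
    grind
  have hlift_a : coneLift a x a = (0, 0, 1) := if_pos rfl
  have hpoint_d : conePoint (x d) = r ^ 2 • coneTwist R r (conePoint (x c)) := by
    rw [← hcd, conePoint_twistMap R hr (norm_ne_zero_iff.1 (by simp [hc])), twistFactor, hc,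
      div_one]
  have hpoint_c : conePoint (x c) = (r ^ 2)⁻¹ • coneTwist R r (conePoint (x d)) := by
    rw [← hdc, conePoint_twistMap R hr (norm_ne_zero_iff.1 (by simp [hd, hr])), twistFactor, hd]
    congr 1
    field_simp
  obtain ⟨hlift_b, hlift_c, hlift_d⟩ := hlift
  rcases (twistPerm_ne_self_iff h).1 hi with rfl | rfl | rfl | rfl
  · rw [hτa, hκa, hκb, hlift_a, hlift_b, map_smul, coneTwist_infinity, smul_smul]
    congr 1
    field_simp
  · rw [hτb, hκa, hκb, hlift_a, hlift_b, map_smul, coneTwist_conePoint_zero, smul_smul]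
    congr 1
    field_simp
  · rw [hτc, hκc, hκd, hlift_c, hlift_d, map_smul, hpoint_d, smul_smul]
    congr 1
    field_simp
  · rw [hτd, hκc, hκd, hlift_c, hlift_d, map_smul, hpoint_c, smul_smul]
    congr 1
    field_simp

variable [Fintype V] {S : Finset V} {G G' : SimpleGraph V}

theorem IsTwist.feynmanIntegrand_twistScale_smul_eq (h : [a, b, c, d].Nodup)
    (hT : IsTwist (twistPerm a b c d) S G G') (hr : r ≠ 0) (hb : x b = 0) (hc : ‖x c‖ = 1)
    (hd : ‖x d‖ = r ^ 2) (hcd : twistMap R r (x c) = x d) (hdc : twistMap R r (x d) = x c)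
    (hx : ∀ i ∈ S, x i ≠ 0) :
    feynmanIntegrand G' (fun i => twistScale a b c d r i •
        coneLift a (fun j => if j ∈ S then twistMap R r (x j) else x j) i) =
      feynmanIntegrand G fun i =>
        (if i ∈ S then twistFactor r (x i) else twistScale a b c d r i) • coneLift a x i := by
  have hmoved : ∀ i, twistPerm a b c d i ≠ i → i ∉ S := fun i hi hiS => hi (hT.fixed i hiS)
  refine hT.feynmanIntegrand_eq (coneForm_coneTwist R hr) (fun i hi => ?_) fun i hi => ?_
  · simp only [coneLift, if_neg hi]
  by_cases hfix : twistPerm a b c d i = i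
  · have hiS : i ∈ S := hi.resolve_right (not_not.2 hfix)
    have hia : i ≠ a := fun hia => (twistPerm_ne_self_iff h).2 (Or.inl hia) hfix
    simp only [hfix, twistScale_of_fixed h r hfix, coneLift, if_neg hia, if_pos hiS, one_smul,
      map_smul, conePoint_twistMap R hr (hx i hiS)]
  · have hτi := hmoved _ fun hτi => hfix ((twistPerm a b c d).injective hτi)
    rw [if_neg (hmoved i hfix), ← coneTwist_twistScale_smul h hr hb hc hd hcd hdc hfix]
    simp only [coneLift, if_neg hτi]

theorem IsTwist.feynmanIntegrand_coneLift_eq (h : [a, b, c, d].Nodup)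
    (hT : IsTwist (twistPerm a b c d) S G G') {n : ℕ} (hG : ∀ v, G.degree v = n)
    (hG' : ∀ v, G'.degree v = n) (hr : r ≠ 0) (hb : x b = 0) (hc : ‖x c‖ = 1)
    (hd : ‖x d‖ = r ^ 2) (hcd : twistMap R r (x c) = x d) (hdc : twistMap R r (x d) = x c)
    (hx : ∀ i ∈ S, x i ≠ 0) :
    feynmanIntegrand G (coneLift a x) = (∏ i, if i ∈ S then twistFactor r (x i) ^ n else 1) *
      feynmanIntegrand G' (coneLift a fun i => if i ∈ S then twistMap R r (x i) else x i) := by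
  have hfactor : ∏ i, (if i ∈ S then twistFactor r (x i) else twistScale a b c d r i) ^ n =
      ∏ i, if i ∈ S then twistFactor r (x i) ^ n else 1 := by
    trans (∏ i, if i ∈ S then twistFactor r (x i) ^ n else 1) * ∏ i, twistScale a b c d r i ^ n
    · rw [← Finset.prod_mul_distrib]
      refine Finset.prod_congr rfl fun i _ => ?_
      by_cases hi : i ∈ S
      · simp only [if_pos hi, twistScale_of_fixed h r (hT.fixed i hi), one_pow, mul_one]
      · simp only [if_neg hi, one_mul]
    · rw [prod_twistScale_pow h hr, mul_one]
  have hfactor_ne : ∏ i, (if i ∈ S then twistFactor r (x i) ^ n else 1) ≠ 0 :=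
    Finset.prod_ne_zero_iff.2 fun i _ => by
      split_ifs with hi
      · exact pow_ne_zero n (twistFactor_ne_zero hr (hx i hi))
      · exact one_ne_zero
  have hcone := hT.feynmanIntegrand_twistScale_smul_eq h hr hb hc hd hcd hdc hx
  simp only [feynmanIntegrand_smul, hG, hG', inv_pow, Finset.prod_inv_distrib] at hcone
  rw [prod_twistScale_pow h hr, inv_one, one_mul, hfactor] at hcone
  rw [hcone, mul_inv_cancel_left₀ hfactor_ne]

end TwistedIntegrand

/-! ### The period as a lower integral -/

section Period

variable {V E : Type*} [Fintype V] [NormedAddCommGroup E] [InnerProductSpace ℝ E]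
  [FiniteDimensional ℝ E] [MeasurableSpace E] [BorelSpace E]

/-- The position space integral of `G` with values in `[0, ∞]`, with `u` at infinity, `w` at `0`
and `z` at `e`. -/
noncomputable def periodLIntegral (G : SimpleGraph V) (u w z : V) (e : E) : ℝ≥0∞ :=
  ∫⁻ x, ENNReal.ofReal (feynmanIntegrand G (coneLift u x)) ∂posMeasure (gaugePos u w z e)

theorem periodIntegrand_eq_feynmanIntegrand (G : SimpleGraph V) (u w z : V) (e : R4)
    (x : {v : V // v ≠ u ∧ v ≠ w ∧ v ≠ z} → R4) :
    periodIntegrand G u w z e x = feynmanIntegrand G (coneLift u (extendPos u w z e x)) := by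
  rw [periodIntegrand, feynmanIntegrand, Finset.prod_filter]
  refine Finset.prod_congr rfl fun ed hed => ?_
  induction ed with
  | _ i j =>
    have hij : i ≠ j := (SimpleGraph.mem_edgeFinset.1 hed).ne
    simp only [propagator_mk, coneForm_coneLift, Sym2.mem_iff, Sym2.lift_mk]
    grind

theorem positionIntegral_eq_toReal (G : SimpleGraph V) (u : V) {w z : V} (hwz : w ≠ z) (e : R4) :
    positionIntegral G u w z e = (periodLIntegral G u w z e).toReal := by
  have hmeas := measurable_feynmanIntegrand_coneLift (E := R4) G u
  rw [positionIntegral, periodLIntegral, ← map_extendPos hwz,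
    lintegral_map hmeas.ennreal_ofReal (measurable_extendPos u w z e)]
  simp_rw [periodIntegrand_eq_feynmanIntegrand]
  exact integral_eq_lintegral_of_nonneg_ae
    (Filter.Eventually.of_forall fun x => feynmanIntegrand_coneLift_nonneg G u _)
    (hmeas.comp (measurable_extendPos u w z e)).aestronglyMeasurable

theorem IsTwist.lintegral_posMeasure_eq {a b c d : V} {S : Finset V} {G G' : SimpleGraph V}
    (h : [a, b, c, d].Nodup) (hT : IsTwist (twistPerm a b c d) S G G')
    (hG : ∀ v, G.degree v = Module.finrank ℝ E) (hG' : ∀ v, G'.degree v = Module.finrank ℝ E)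
    {e t : E} (he : ‖e‖ = 1) (ht : t ≠ 0) {P : V → Option E} (hb : P b = some 0)
    (hc : P c = some e) (hd : P d = some t) (hS : ∀ i ∈ S, P i = none) :
    ∫⁻ x, ENNReal.ofReal (feynmanIntegrand G (coneLift a x)) ∂posMeasure P =
      ∫⁻ x, ENNReal.ofReal (feynmanIntegrand G' (coneLift a x)) ∂posMeasure P := by
  have : Nontrivial E := ⟨t, 0, ht⟩
  obtain ⟨r, hr, hrt⟩ : ∃ r : ℝ, r ≠ 0 ∧ ‖t‖ = r ^ 2 :=
    ⟨√‖t‖, Real.sqrt_ne_zero'.2 (norm_pos_iff.2 ht), (Real.sq_sqrt (norm_nonneg t)).symm⟩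
  obtain ⟨R, het, hte⟩ := exists_twistMap_swap hr (p := e) (q := t) (by rw [he, one_mul, hrt])
  refine lintegral_pi_eq_of_map_withDensity (φ := fun i y => if i ∈ S then twistMap R r y else y)
    (J := fun i y =>
      if i ∈ S then ENNReal.ofReal (twistFactor r y ^ Module.finrank ℝ E) else 1)
    (fun i => ?_) (fun i => ?_) (fun i => ?_)
    (measurable_feynmanIntegrand_coneLift G' a).ennreal_ofReal ?_
  · split_ifs
    exacts [measurable_twistMap R r, measurable_id]
  · split_ifs
    exacts [((measurable_twistFactor r).pow_const _).ennreal_ofReal, measurable_const]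
  · split_ifs with hi
    · rw [hS i hi]
      exact map_withDensity_twistMap R hr
    · rw [withDensity_const, one_smul]
      exact Measure.map_id
  · filter_upwards [ae_posMeasure P (Measure.ae_ne volume (0 : E))] with x hx
    have hxb := (hx b).1 0 hb
    have hxc := (hx c).1 e hc
    have hxd := (hx d).1 t hd
    rw [hT.feynmanIntegrand_coneLift_eq h hG hG' hr hxb (hxc ▸ he) (hxd ▸ hrt)
      (hxc ▸ hxd ▸ het) (hxc ▸ hxd ▸ hte) fun i hi => (hx i).2 (hS i hi),
      ENNReal.ofReal_mul (Finset.prod_nonneg fun i _ => ?_),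
      ENNReal.ofReal_prod_of_nonneg fun i _ => ?_]
    · simp only [apply_ite ENNReal.ofReal, ENNReal.ofReal_one]
    all_goals split_ifs <;> first | exact zero_le_one | exact pow_nonneg (twistFactor_nonneg _ _) _

theorem IsTwist.periodLIntegral_eq {a b c d : V} {S : Finset V} {G G' : SimpleGraph V}
    (h : [a, b, c, d].Nodup) (hT : IsTwist (twistPerm a b c d) S G G')
    (hG : ∀ v, G.degree v = Module.finrank ℝ E) (hG' : ∀ v, G'.degree v = Module.finrank ℝ E)
    {e : E} (he : ‖e‖ = 1) :
    periodLIntegral G a b c e = periodLIntegral G' a b c e := by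
  have : Nontrivial E := ⟨e, 0, norm_ne_zero_iff.1 (he ▸ one_ne_zero)⟩
  have hne := h
  simp only [List.nodup_cons, List.mem_cons, List.not_mem_nil, or_false, not_or] at hne
  obtain ⟨⟨-, -, had⟩, ⟨hbc, hbd⟩, hcd, -⟩ := hne
  have hfree : gaugePos a b c e d = none :=
    gaugePos_eq_none.2 ⟨Ne.symm had, Ne.symm hbd, Ne.symm hcd⟩
  unfold periodLIntegral
  rw [lintegral_posMeasure_fix hfree (measurable_feynmanIntegrand_coneLift G a).ennreal_ofReal,
    lintegral_posMeasure_fix hfree (measurable_feynmanIntegrand_coneLift G' a).ennreal_ofReal]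
  refine lintegral_congr_ae ?_
  filter_upwards [Measure.ae_ne volume (0 : E)] with t ht
  refine hT.lintegral_posMeasure_eq h hG hG' he ht (by simp [gaugePos, hbd, hbc])
    (by simp [gaugePos, hcd]) (by simp) fun i hi => ?_
  have hi' := (twistPerm_ne_self_iff h).not.1 (not_not.2 (hT.fixed i hi))
  rw [Function.update_of_ne (by tauto), gaugePos_eq_none]
  tauto

/-! ### Independence of the gauge -/

theorem periodLIntegral_map {W : Type*} [Fintype W] (σ : V ≃ W) (G : SimpleGraph V) (u w z : V)
    (e : E) : periodLIntegral (G.map σ) (σ u) (σ w) (σ z) e = periodLIntegral G u w z e := by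
  have hlift : ∀ x : W → E, coneLift (σ u) x ∘ σ = coneLift u (x ∘ σ) := fun x =>
    funext fun i => by simp [coneLift]
  have hgauge : gaugePos (σ u) (σ w) (σ z) e ∘ σ = gaugePos u w z e :=
    funext fun v => gaugePos_equiv σ u w z v e
  simp only [periodLIntegral, feynmanIntegrand_map, hlift]
  rw [← hgauge, ← lintegral_posMeasure_comp_equiv σ]

theorem periodLIntegral_swap {G : SimpleGraph V} (hG : ∀ v, G.degree v = Module.finrank ℝ E)
    {a b c d : V} (h : [a, b, c, d].Nodup) {e : E} (he : ‖e‖ = 1) :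
    periodLIntegral G a b c e = periodLIntegral G b a d e := by
  obtain ⟨ha, hb, -, hd⟩ := twistPerm_apply_of_nodup h
  have hmap := periodLIntegral_map (twistPerm a b c d) G b a d e
  rw [ha, hb, hd] at hmap
  rw [← hmap]
  refine (isTwist_map (twistPerm_involutive h) G).periodLIntegral_eq h hG (fun v => ?_) he
  convert ((SimpleGraph.Iso.map (twistPerm a b c d) G).degree_eq _).trans
    (hG ((twistPerm a b c d).symm v))
  exact ((twistPerm a b c d).apply_symm_apply v).symm

theorem lintegral_posMeasure_isometry (G : SimpleGraph V) {u : V} {P P' : V → Option E}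
    {σ : E → E} (hσ : MeasurePreserving σ) (hiso : Isometry σ) (hu : P u = P' u)
    (hP : ∀ i, i ≠ u → P' i = (P i).map σ) :
    ∫⁻ x, ENNReal.ofReal (feynmanIntegrand G (coneLift u x)) ∂posMeasure P =
      ∫⁻ x, ENNReal.ofReal (feynmanIntegrand G (coneLift u x)) ∂posMeasure P' := by
  refine lintegral_pi_eq_of_map_withDensity (φ := fun i => if i = u then id else σ)
    (J := fun _ _ => 1) (fun i => ?_) (fun i => measurable_const) (fun i => ?_)
    (measurable_feynmanIntegrand_coneLift G u).ennreal_ofReal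
    (Filter.Eventually.of_forall fun x => ?_)
  · split_ifs
    exacts [measurable_id, hσ.measurable]
  · rw [withDensity_const, one_smul]
    split_ifs with hi
    · rw [hi, hu, Measure.map_id]
    · rw [hP i hi]
      cases P i with
      | none => exact hσ.map_eq
      | some p => exact Measure.map_dirac' hσ.measurable p
  · rw [Finset.prod_const_one, one_mul]
    refine congrArg ENNReal.ofReal (Finset.prod_congr rfl fun ed _ => ?_)
    induction ed with
    | _ i j =>
      simp only [propagator_mk, coneForm_coneLift]
      by_cases hi : i = u <;> by_cases hj : j = u <;>
        simp [hi, hj, ← dist_eq_norm, hiso.dist_eq]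

theorem periodLIntegral_congr_norm (G : SimpleGraph V) {u w z : V} (huz : u ≠ z)
    {e e' : E} (h : ‖e‖ = ‖e'‖) :
    periodLIntegral G u w z e = periodLIntegral G u w z e' := by
  obtain ⟨R, hR, -⟩ := exists_isometry_swap h
  refine lintegral_posMeasure_isometry G R.measurePreserving R.isometry ?_ fun i _ => ?_
  · simp [gaugePos, huz]
  · unfold gaugePos
    split_ifs <;> simp [hR]

theorem periodLIntegral_comm (G : SimpleGraph V) {u w z : V} (huw : u ≠ w) (huz : u ≠ z)
    (hwz : w ≠ z) (e : E) : periodLIntegral G u w z e = periodLIntegral G u z w e := by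
  refine lintegral_posMeasure_isometry G (Measure.measurePreserving_sub_left volume e)
    (IsometryEquiv.subLeft e).isometry ?_ fun i hi => ?_
  · simp [gaugePos, huw, huz]
  · unfold gaugePos
    rcases eq_or_ne i w with rfl | hiw
    · simp [hwz]
    rcases eq_or_ne i z with rfl | hiz
    · simp [hwz.symm]
    · simp [hi, hiw, hiz]

variable {G : SimpleGraph V} {e : E}

theorem periodLIntegral_eq_of_fst_snd (hcard : 4 < Fintype.card V)
    (hG : ∀ v, G.degree v = Module.finrank ℝ E) (he : ‖e‖ = 1) {u w z z' : V}
    (h : [u, w, z].Nodup) (h' : [u, w, z'].Nodup) :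
    periodLIntegral G u w z e = periodLIntegral G u w z' e := by
  obtain ⟨v, -, hv⟩ := Finset.exists_mem_notMem_of_card_lt_card (s := {u, w, z, z'})
    (t := Finset.univ) (Finset.card_le_four.trans_lt hcard)
  trans periodLIntegral G w u v e
  · exact periodLIntegral_swap hG (by grind) he
  · exact (periodLIntegral_swap hG (by grind) he).symm

theorem periodLIntegral_swap_fst_snd (hcard : 4 < Fintype.card V)
    (hG : ∀ v, G.degree v = Module.finrank ℝ E) (he : ‖e‖ = 1) {u w z : V}
    (h : [u, w, z].Nodup) :
    periodLIntegral G u w z e = periodLIntegral G w u z e := by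
  obtain ⟨v, -, hv⟩ := Finset.exists_mem_notMem_of_card_lt_card (s := {u, w, z})
    (t := Finset.univ) (Finset.card_le_three.trans_lt ((by decide : 3 < 4).trans hcard))
  trans periodLIntegral G w u v e
  · exact periodLIntegral_swap hG (by grind) he
  · exact periodLIntegral_eq_of_fst_snd hcard hG he (by grind) (by grind)

theorem periodLIntegral_eq_of_fst (hcard : 4 < Fintype.card V)
    (hG : ∀ v, G.degree v = Module.finrank ℝ E) (he : ‖e‖ = 1) {u w z w' z' : V}
    (h : [u, w, z].Nodup) (h' : [u, w', z'].Nodup) :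
    periodLIntegral G u w z e = periodLIntegral G u w' z' e := by
  rcases eq_or_ne w w' with rfl | hw
  · exact periodLIntegral_eq_of_fst_snd hcard hG he h h'
  calc periodLIntegral G u w z e
      = periodLIntegral G u w w' e :=
        periodLIntegral_eq_of_fst_snd hcard hG he h (by grind)
    _ = periodLIntegral G u w' w e := periodLIntegral_comm G (by grind) (by grind) hw e
    _ = periodLIntegral G u w' z' e :=
        periodLIntegral_eq_of_fst_snd hcard hG he (by grind) h'

theorem periodLIntegral_eq_of_regular (hcard : 4 < Fintype.card V)
    (hG : ∀ v, G.degree v = Module.finrank ℝ E) {e' : E} (he : ‖e‖ = 1) (he' : ‖e'‖ = 1)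
    {u w z u' w' z' : V} (h : [u, w, z].Nodup) (h' : [u', w', z'].Nodup) :
    periodLIntegral G u w z e = periodLIntegral G u' w' z' e' := by
  rw [periodLIntegral_congr_norm G (by grind) (he'.trans he.symm)]
  rcases eq_or_ne u u' with rfl | hu
  · exact periodLIntegral_eq_of_fst hcard hG he h h'
  obtain ⟨v, -, hv⟩ := Finset.exists_mem_notMem_of_card_lt_card (s := {u, u'})
    (t := Finset.univ) (Finset.card_le_two.trans_lt ((by decide : 2 < 4).trans hcard))
  calc periodLIntegral G u w z e
      = periodLIntegral G u u' v e := periodLIntegral_eq_of_fst hcard hG he h (by grind)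
    _ = periodLIntegral G u' u v e := periodLIntegral_swap_fst_snd hcard hG he (by grind)
    _ = periodLIntegral G u' w' z' e := periodLIntegral_eq_of_fst hcard hG he (by grind) h'

end Period

/-- **Twist identity.** Let `Γ` be completed primitive with vertex set partitioned as
`V₁ ⊔ V₂ ⊔ {a,b,c,d}` and no edge joining `V₁` to `V₂`.  If the simple 4-regular graph
`Γ̃` is obtained from the twisted graph `Γ₀` by (possibly) swapping `ac ↔ bd` and/or
`ad ↔ bc`, then `Γ̃` is completed primitive and has the same period as `Γ`. -/
theorem twist_identity {V : Type*} [Fintype V] (G Gt : SimpleGraph V)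
    (hG : CompletedPrimitive G)
    (V₁ V₂ : Finset V) (a b c d : V)
    (hab : a ≠ b) (hac : a ≠ c) (had : a ≠ d) (hbc : b ≠ c) (hbd : b ≠ d) (hcd : c ≠ d)
    (hdisj : Disjoint V₁ V₂)
    (hQ1 : a ∉ V₁ ∧ b ∉ V₁ ∧ c ∉ V₁ ∧ d ∉ V₁)
    (hQ2 : a ∉ V₂ ∧ b ∉ V₂ ∧ c ∉ V₂ ∧ d ∉ V₂)
    (hcover : ∀ x : V, x ∈ V₁ ∨ x ∈ V₂ ∨ x = a ∨ x = b ∨ x = c ∨ x = d)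
    (h1ne : V₁.Nonempty) (h2ne : V₂.Nonempty)
    (hsep : ∀ x ∈ V₁, ∀ y ∈ V₂, ¬ G.Adj x y)
    (hswap : ∃ E₁ : Finset (Sym2 V),
      SwapOpt (twistGraph G V₁ V₂ a b c d).edgeFinset s(a, c) s(b, d) E₁ ∧
      SwapOpt E₁ s(a, d) s(b, c) Gt.edgeFinset)
    (hreg : ∀ v : V, Gt.degree v = 4) :
    CompletedPrimitive Gt ∧
    ∀ (u w z : V) (e : R4) (u' w' z' : V) (e' : R4),
      u ≠ w → u ≠ z → w ≠ z → ‖e‖ = 1 →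
      u' ≠ w' → u' ≠ z' → w' ≠ z' → ‖e'‖ = 1 →
      period G u w z e = period Gt u' w' z' e' := by
  have h : [a, b, c, d].Nodup := by simp [*]
  have hT := isTwist_of_swapOpt h hdisj hQ2 hcover hsep hswap
  refine ⟨hT.completedPrimitive h hG hreg, ?_⟩
  intro u w z e u' w' z' e' huw huz hwz he huw' huz' hwz' he'
  have hdim : Module.finrank ℝ R4 = 4 := finrank_euclideanSpace_fin
  have hcard : 4 < Fintype.card V := hG.1 a ▸ G.degree_lt_card_verts a
  have hdeg : ∀ v, G.degree v = Module.finrank ℝ R4 := fun v => (hG.1 v).trans hdim.symm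
  have hdeg' : ∀ v, Gt.degree v = Module.finrank ℝ R4 := fun v => (hreg v).trans hdim.symm
  have hlintegral : periodLIntegral G u w z e = periodLIntegral Gt u' w' z' e' :=
    calc periodLIntegral G u w z e
        = periodLIntegral G a b c e :=
          periodLIntegral_eq_of_regular hcard hdeg he he (by simp [*]) (by simp [*])
      _ = periodLIntegral Gt a b c e := hT.periodLIntegral_eq h hdeg hdeg' he
      _ = periodLIntegral Gt u' w' z' e' :=
          periodLIntegral_eq_of_regular hcard hdeg' he he' (by simp [*]) (by simp [*])
  rw [period, period, positionIntegral_eq_toReal G u hwz, positionIntegral_eq_toReal Gt u' hwz',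
    hlintegral]
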